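/- arXiv:1511.00136 — 2 statements merged into one kernel-verified Lean document; each statement's English description precedes it below -/
import Mathlib

section
/- Let n ≥ 2. The group UVP_n admits the following presentation: the homomorphism from the presented group with generators x_{k,l} (for 1 ≤ k ≠ l ≤ n) and defining relations x_{i,j}x_{k,l} = x_{k,l}x_{i,j} for all index pairs with {i,j} ≠ {k,l}, to UVB_n, sending x_{k,l} to λ_{k,l}, is injective and its image is exactly UVP_n. -/
/-!  Common setup: the unrestricted virtual braid group `UVB n`, its generators
σ_k, ρ_k (1-based indices), the elements λ_{i,j} and B_{i,j}, the permutation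
homomorphism ι (characterized by `IsIota`), the section s : S_n → UVB n
(characterized by `IsPermSection`), and fused Markov equivalence. -/

/-- Generators of the unrestricted virtual braid group `UVB n`:
`Sum.inl i` is the classical generator σ_{i+1} and `Sum.inr i` is the virtual
generator ρ_{i+1}, for `i : Fin (n-1)` (so the 1-based indices are `1, …, n-1`). -/
abbrev UVBGen (n : ℕ) := Sum (Fin (n - 1)) (Fin (n - 1))

namespace UVBGen
def sg {n : ℕ} (i : Fin (n - 1)) : FreeGroup (UVBGen n) := FreeGroup.of (Sum.inl i)
def rg {n : ℕ} (i : Fin (n - 1)) : FreeGroup (UVBGen n) := FreeGroup.of (Sum.inr i)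
end UVBGen

open UVBGen in
/-- The defining relations of the unrestricted virtual braid group. -/
def uvbRels (n : ℕ) : Set (FreeGroup (UVBGen n)) :=
  {r | (∃ i j : Fin (n - 1), (j : ℕ) = (i : ℕ) + 1 ∧
          (r = sg i * sg j * sg i * (sg j * sg i * sg j)⁻¹ ∨
           r = rg i * rg j * rg i * (rg j * rg i * rg j)⁻¹ ∨
           r = rg i * rg j * sg i * (sg j * rg i * rg j)⁻¹ ∨
           r = rg i * sg j * sg i * (sg j * sg i * rg j)⁻¹ ∨
           r = rg j * sg i * sg j * (sg i * sg j * rg i)⁻¹)) ∨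
       (∃ i j : Fin (n - 1), ((i : ℕ) + 2 ≤ (j : ℕ) ∨ (j : ℕ) + 2 ≤ (i : ℕ)) ∧
          (r = sg i * sg j * (sg j * sg i)⁻¹ ∨
           r = rg i * rg j * (rg j * rg i)⁻¹ ∨
           r = sg i * rg j * (rg j * sg i)⁻¹)) ∨
       (∃ i : Fin (n - 1), r = rg i * rg i)}

/-- The unrestricted virtual braid group on `n` strands. -/
abbrev UVB (n : ℕ) := PresentedGroup (uvbRels n)

namespace UVB

/-- The generator σ_k (1-based index; meaningful for `1 ≤ k ≤ n-1`, junk value `1` otherwise). -/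
def sigma (n k : ℕ) : UVB n :=
  if h : 1 ≤ k ∧ k ≤ n - 1 then PresentedGroup.of (Sum.inl ⟨k - 1, by omega⟩) else 1

/-- The generator ρ_k (1-based index; meaningful for `1 ≤ k ≤ n-1`, junk value `1` otherwise). -/
def rho (n k : ℕ) : UVB n :=
  if h : 1 ≤ k ∧ k ≤ n - 1 then PresentedGroup.of (Sum.inr ⟨k - 1, by omega⟩) else 1

/-- The element λ_{i,j} of `UVB n` (1-based indices `1 ≤ i ≠ j ≤ n`; junk value `1` if `i = j`).
For `i < j`:  `λ_{i,j} = ρ_{j-1}⋯ρ_{i+1} · ρ_i σ_i⁻¹ · ρ_{i+1}⋯ρ_{j-1}` and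
`λ_{j,i} = ρ_{j-1}⋯ρ_{i+1} · σ_i⁻¹ ρ_i · ρ_{i+1}⋯ρ_{j-1}`. -/
def lam (n i j : ℕ) : UVB n :=
  if i < j then
    (((List.range' (i + 1) (j - 1 - i)).reverse.map (rho n)).prod) *
      (rho n i * (sigma n i)⁻¹) *
      (((List.range' (i + 1) (j - 1 - i)).map (rho n)).prod)
  else if j < i then
    (((List.range' (j + 1) (i - 1 - j)).reverse.map (rho n)).prod) *
      ((sigma n j)⁻¹ * rho n j) *
      (((List.range' (j + 1) (i - 1 - j)).map (rho n)).prod)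
  else 1

/-- The element `B_{i,j} = ρ_{j-1}ρ_{j-2}⋯ρ_{i+1}ρ_i` for `i < j`, and `1` otherwise. -/
def B (n i j : ℕ) : UVB n :=
  if i < j then ((List.range' i (j - i)).reverse.map (rho n)).prod else 1

/-- The subgroup `U_j` of `UVB n` generated by `{λ_{i,j}, λ_{j,i} : 1 ≤ i < j}`. -/
def U (n j : ℕ) : Subgroup (UVB n) :=
  Subgroup.closure {x | ∃ i, 1 ≤ i ∧ i < j ∧ (x = lam n i j ∨ x = lam n j i)}

end UVB

/-- `ι : UVB n →* S_n` is the homomorphism sending σ_k and ρ_k to the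
transposition (k, k+1) (written 0-based on `Fin n`). -/
def IsIota (n : ℕ) (ι : UVB n →* Equiv.Perm (Fin n)) : Prop :=
  ∀ (k : ℕ) (h1 : 1 ≤ k) (h2 : k ≤ n - 1),
    ι (UVB.sigma n k) = Equiv.swap ⟨k - 1, by omega⟩ ⟨k, by omega⟩ ∧
    ι (UVB.rho n k) = Equiv.swap ⟨k - 1, by omega⟩ ⟨k, by omega⟩

/-- `s : S_n →* UVB n` is the homomorphism sending the transposition (k, k+1) to ρ_k. -/
def IsPermSection (n : ℕ) (s : Equiv.Perm (Fin n) →* UVB n) : Prop :=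
  ∀ (k : ℕ) (h1 : 1 ≤ k) (h2 : k ≤ n - 1),
    s (Equiv.swap ⟨k - 1, by omega⟩ ⟨k, by omega⟩) = UVB.rho n k

/-- The number of orbits of a permutation of `Fin n`
(= number of fixed points + number of nontrivial cycles). -/
def numOrbits {n : ℕ} (π : Equiv.Perm (Fin n)) : ℕ :=
  (Finset.univ.filter fun x => π x = x).card + π.cycleType.card

namespace UVB

private def embedGen (n : ℕ) : UVBGen n → UVBGen (n + 1)
  | Sum.inl i => Sum.inl ⟨i.val, by have := i.isLt; omega⟩
  | Sum.inr i => Sum.inr ⟨i.val, by have := i.isLt; omega⟩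

open UVBGen in
/-- The natural inclusion `UVB n →* UVB (n+1)` (σ_k ↦ σ_k, ρ_k ↦ ρ_k). -/
def incl (n : ℕ) : UVB n →* UVB (n + 1) :=
  PresentedGroup.toGroup (f := fun x => PresentedGroup.of (embedGen n x)) (by
    have key : (FreeGroup.lift fun x => (PresentedGroup.of (embedGen n x) : UVB (n + 1)))
        = (PresentedGroup.mk (uvbRels (n + 1))).comp (FreeGroup.map (embedGen n)) := by
      ext x
      simp [PresentedGroup.of]
    intro r hr
    rw [key]
    simp only [MonoidHom.comp_apply]
    have hmem : FreeGroup.map (embedGen n) r ∈ uvbRels (n + 1) := by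
      have hsg : ∀ i : Fin (n - 1), FreeGroup.map (embedGen n) (sg i)
          = sg (⟨i.val, by have := i.isLt; omega⟩ : Fin (n + 1 - 1)) := by
        intro i; simp [sg, embedGen]
      have hrg : ∀ i : Fin (n - 1), FreeGroup.map (embedGen n) (rg i)
          = rg (⟨i.val, by have := i.isLt; omega⟩ : Fin (n + 1 - 1)) := by
        intro i; simp [rg, embedGen]
      rcases hr with ⟨i, j, hij, hc⟩ | ⟨i, j, hij, hc⟩ | ⟨i, hc⟩
      · refine Or.inl ⟨⟨i.val, by have := i.isLt; omega⟩, ⟨j.val, by have := j.isLt; omega⟩,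
          by simpa using hij, ?_⟩
        rcases hc with h | h | h | h | h <;> subst h <;>
          simp only [map_mul, map_inv, hsg, hrg] <;> tauto
      · refine Or.inr (Or.inl ⟨⟨i.val, by have := i.isLt; omega⟩, ⟨j.val, by have := j.isLt; omega⟩,
          by simpa using hij, ?_⟩)
        rcases hc with h | h | h <;> subst h <;>
          simp only [map_mul, map_inv, hsg, hrg] <;> tauto
      · refine Or.inr (Or.inr ⟨⟨i.val, by have := i.isLt; omega⟩, ?_⟩)
        subst hc
        simp only [map_mul, hsg, hrg]
    exact (QuotientGroup.eq_one_iff _).mpr (Subgroup.subset_normalClosure hmem))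

end UVB

/-- The elementary fused Markov moves on the disjoint union of the groups `UVB n`:
conjugation, and the three right stabilizations (positive, negative, virtual). -/
inductive MarkovBase : (Σ n, UVB n) → (Σ n, UVB n) → Prop
  | conj (n : ℕ) (α γ : UVB n) : MarkovBase ⟨n, α⟩ ⟨n, γ * α * γ⁻¹⟩
  | stabPos (n : ℕ) (α : UVB n) :
      MarkovBase ⟨n, α⟩ ⟨n + 1, UVB.incl n α * UVB.sigma (n + 1) n⟩
  | stabNeg (n : ℕ) (α : UVB n) :
      MarkovBase ⟨n, α⟩ ⟨n + 1, UVB.incl n α * (UVB.sigma (n + 1) n)⁻¹⟩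
  | stabVirt (n : ℕ) (α : UVB n) :
      MarkovBase ⟨n, α⟩ ⟨n + 1, UVB.incl n α * UVB.rho (n + 1) n⟩

/-- Fused Markov equivalence: the smallest equivalence relation generated by the
elementary Markov moves.  By Kamada's theorem, two unrestricted virtual braids are
fused Markov equivalent iff their closures are equivalent fused links. -/
def Markov : (Σ n, UVB n) → (Σ n, UVB n) → Prop := Relation.EqvGen MarkovBase

/-! ## Statement 0 -/

/-- Generators for the presentation of `UVP n`: a symbol x_{k,l} for each pair
`1 ≤ k ≠ l ≤ n`. -/
abbrev UVPGen (n : ℕ) :=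
  {p : ℕ × ℕ // 1 ≤ p.1 ∧ p.1 ≤ n ∧ 1 ≤ p.2 ∧ p.2 ≤ n ∧ p.1 ≠ p.2}

/-- The defining relations: x_{i,j} and x_{k,l} commute whenever {i,j} ≠ {k,l}
(as unordered pairs). -/
def uvpRels (n : ℕ) : Set (FreeGroup (UVPGen n)) :=
  {r | ∃ p q : UVPGen n,
        ¬((p.1.1 = q.1.1 ∧ p.1.2 = q.1.2) ∨ (p.1.1 = q.1.2 ∧ p.1.2 = q.1.1)) ∧
        r = FreeGroup.of p * FreeGroup.of q * (FreeGroup.of p)⁻¹ * (FreeGroup.of q)⁻¹}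

/-!
Rewriting `σ_i` as `λ_{i,i+1}⁻¹ ρ_i`, the defining relations of `UVB_n` say three things: the `ρ_i`
satisfy Moore's relations for `S_n`; conjugation by the `ρ_i` permutes the indices of the `λ_{k,l}`;
and `λ_{i,j}` commutes with `λ_{k,l}` whenever `{i,j} ≠ {k,l}`. Hence `UVB_n` is the semidirect
product of the presented group and `S_n`, and `ι` is the projection to `S_n`, whose kernel is the
normal factor.

That Moore's relations suffice for a homomorphism from `S_n` sending the adjacent transpositions to
the `ρ_i` is seen from coset representatives of the point stabilizers. The generators `x_{k,l}`
correspond to ordered pairs of points, on which `S_n` acts transitively; an equivariant family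
indexed by them is therefore determined by its value at a single pair, and the commutation relations
need only be checked on one triple and one quadruple of points.
-/

open Equiv (Perm swap swap_comm swap_apply_left swap_apply_right swap_apply_of_ne_of_ne)

section Moore

variable {G : Type*} [Group G] {m : ℕ}

/-- The relations of Moore's presentation of the symmetric group `S_{m+1}`, as conditions on the
images `r i` of the adjacent transpositions `(i, i + 1)`. -/
structure IsMooreFamily (r : Fin m → G) : Prop where
  mul_self (i : Fin m) : r i * r i = 1
  braid {i j : Fin m} : (i : ℕ) + 1 = j → r i * r j * r i = r j * r i * r j
  commute {i j : Fin m} : (i : ℕ) + 2 ≤ j → Commute (r i) (r j)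

/-- The product `r_{a-1} ⋯ r_1 r_0`, which represents the coset of the elements moving the point `0`
to the point `a`. -/
def cosetRep (r : Fin m → G) : Fin (m + 1) → G :=
  Fin.induction 1 fun i c => r i * c

@[simp]
lemma cosetRep_zero (r : Fin m → G) : cosetRep r 0 = 1 := rfl

lemma cosetRep_succ (r : Fin m → G) (i : Fin m) :
    cosetRep r i.succ = r i * cosetRep r i.castSucc := rfl

lemma map_cosetRep_apply_zero {α : Type*} [DecidableEq α] {ι : G →* Perm α} {r : Fin m → G}
    {v : Fin (m + 1) → α} (hι : ∀ i, ι (r i) = swap (v i.castSucc) (v i.succ))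
    (a : Fin (m + 1)) : ι (cosetRep r a) (v 0) = v a := by
  induction a using Fin.induction with
  | zero => simp
  | succ i ih =>
    rw [cosetRep_succ, map_mul, Equiv.Perm.mul_apply, ih, hι, swap_apply_left]

lemma castSucc_eq_succ {i j : Fin m} (hij : (i : ℕ) + 1 = j) : j.castSucc = i.succ :=
  Fin.ext (by rw [Fin.val_castSucc, Fin.val_succ, hij])

lemma castSucc_ne_succ_and_ne {i j : Fin m} (hij : (i : ℕ) + 1 = j) :
    i.castSucc ≠ i.succ ∧ i.castSucc ≠ j.succ ∧ i.succ ≠ j.succ := by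
  simp only [ne_eq, Fin.ext_iff, Fin.val_castSucc, Fin.val_succ]
  omega

lemma swap_braid {α : Type*} [DecidableEq α] {x y z : α} (hxy : x ≠ y) (hxz : x ≠ z)
    (hyz : y ≠ z) : swap x y * swap y z * swap x y = swap y z * swap x y * swap y z := by
  rw [Equiv.swap_mul_swap_mul_swap hxy hxz, swap_comm x y, swap_comm y z,
    Equiv.swap_mul_swap_mul_swap hyz.symm hxz.symm, swap_comm]

lemma isMooreFamily_swap :
    IsMooreFamily fun i : Fin m => (swap i.castSucc i.succ : Perm (Fin (m + 1))) where
  mul_self i := Equiv.swap_mul_self _ _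
  braid {i j} hij := by
    obtain ⟨hxy, hxz, hyz⟩ := castSucc_ne_succ_and_ne hij
    rw [castSucc_eq_succ hij]
    exact swap_braid hxy hxz hyz
  commute {i j} hij := by
    refine (Equiv.Perm.disjoint_swap_swap ?_).commute
    simp only [List.nodup_cons, List.mem_cons, List.not_mem_nil, List.nodup_nil, or_false,
      not_false_eq_true, and_true, Fin.ext_iff, Fin.val_castSucc, Fin.val_succ]
    omega

lemma closure_range_swap_castSucc_succ (m : ℕ) :
    Subgroup.closure (Set.range fun i : Fin m => (swap i.castSucc i.succ : Perm (Fin (m + 1)))) =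
      ⊤ :=
  Subgroup.closure_eq_top_of_mclosure_eq_top (Equiv.Perm.mclosure_swap_castSucc_succ m)

namespace IsMooreFamily

lemma prodMk {H : Type*} [Group H] {r : Fin m → G} {s : Fin m → H} (hr : IsMooreFamily r)
    (hs : IsMooreFamily s) : IsMooreFamily fun i => (r i, s i) where
  mul_self i := Prod.ext (hr.mul_self i) (hs.mul_self i)
  braid hij := Prod.ext (hr.braid hij) (hs.braid hij)
  commute hij := (hr.commute hij).prod (hs.commute hij)

lemma map {H : Type*} [Group H] {r : Fin m → G} (hr : IsMooreFamily r) (F : G →* H) :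
    IsMooreFamily fun i => F (r i) where
  mul_self i := by rw [← map_mul, hr.mul_self, map_one]
  braid hij := by simp only [← map_mul, hr.braid hij]
  commute hij := (hr.commute hij).map F

lemma tail {r : Fin (m + 1) → G} (hr : IsMooreFamily r) : IsMooreFamily fun i => r i.succ where
  mul_self i := hr.mul_self i.succ
  braid hij := hr.braid (by simpa using hij)
  commute hij := hr.commute (by simp only [Fin.val_succ]; omega)

lemma inv_eq {r : Fin m → G} (hr : IsMooreFamily r) (i : Fin m) : (r i)⁻¹ = r i :=
  inv_eq_of_mul_eq_one_left (hr.mul_self i)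

lemma commute_cosetRep {r : Fin m → G} (hr : IsMooreFamily r) {i : Fin m} (a : Fin (m + 1))
    (hai : (a : ℕ) < i) : Commute (r i) (cosetRep r a) := by
  induction a using Fin.induction with
  | zero => exact Commute.one_right _
  | succ a ih =>
    simp only [Fin.val_succ, Fin.val_castSucc] at hai ih
    rw [cosetRep_succ]
    exact (hr.commute (by omega)).symm.mul_right (ih (by omega))

/-- Sliding `r i` to the right across the factors `r (i + 1)` and `r i` of the product raises its
index by one. -/
lemma mul_cosetRep_of_lt {r : Fin m → G} (hr : IsMooreFamily r) {i j : Fin m}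
    (hij : (i : ℕ) + 1 = j) (a : Fin (m + 1)) (hja : (j : ℕ) < a) :
    r i * cosetRep r a = cosetRep r a * r j := by
  induction a using Fin.induction with
  | zero => simp at hja
  | succ a ih =>
    rw [cosetRep_succ]
    simp only [Fin.val_succ, Fin.val_castSucc] at hja ih
    obtain hja | hja := (Nat.lt_succ_iff.mp hja).lt_or_eq
    · have hcomm : Commute (r i) (r a) := hr.commute (by omega)
      rw [← mul_assoc, hcomm.eq, mul_assoc, ih hja, mul_assoc]
    · obtain rfl : j = a := Fin.ext hja
      have hcomm : Commute (r j) (cosetRep r i.castSucc) :=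
        hr.commute_cosetRep _ (by simp only [Fin.val_castSucc]; omega)
      rw [castSucc_eq_succ hij, cosetRep_succ, mul_assoc, mul_assoc, ← hcomm.eq]
      simp only [← mul_assoc, hr.braid hij]

open Subgroup in
lemma exists_mul_cosetRep {r : Fin (m + 1) → G} (hr : IsMooreFamily r) (i : Fin (m + 1))
    (a : Fin (m + 2)) : ∃ h ∈ closure (Set.range fun j : Fin m => r j.succ),
      r i * cosetRep r a = cosetRep r (swap i.castSucc i.succ a) * h := by
  have tail_mem (j : Fin m) : r j.succ ∈ closure (Set.range fun j : Fin m => r j.succ) :=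
    subset_closure ⟨j, rfl⟩
  obtain hlt | rfl | hgt := lt_trichotomy a i.castSucc
  · obtain ⟨j, rfl⟩ : ∃ j : Fin m, j.succ = i :=
      Fin.exists_succ_eq.mpr (Fin.castSucc_pos_iff.mp (a.zero_le.trans_lt hlt)).ne'
    have hfix : swap j.succ.castSucc j.succ.succ a = a :=
      swap_apply_of_ne_of_ne hlt.ne (hlt.trans Fin.castSucc_lt_succ).ne
    exact ⟨r j.succ, tail_mem j, by rw [hfix, (hr.commute_cosetRep a hlt).eq]⟩
  · exact ⟨1, one_mem _, by simp [cosetRep_succ]⟩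
  · obtain rfl | hgt := (Fin.castSucc_lt_iff_succ_le.mp hgt).eq_or_lt
    · exact ⟨1, one_mem _, by simp [cosetRep_succ, ← mul_assoc, hr.mul_self]⟩
    · obtain ⟨j, rfl⟩ : ∃ j : Fin m, j.castSucc = i :=
        Fin.exists_castSucc_eq.mpr fun hi => by
          simp only [hi, Fin.succ_last, Nat.succ_eq_add_one, Fin.lt_def, Fin.val_last] at hgt
          omega
      have hfix : swap j.castSucc.castSucc j.castSucc.succ a = a :=
        swap_apply_of_ne_of_ne (Fin.castSucc_lt_succ.trans hgt).ne' hgt.ne'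
      exact ⟨r j.succ, tail_mem j, by rw [hfix, hr.mul_cosetRep_of_lt (j := j.succ) rfl a hgt]⟩

open Subgroup in
lemma exists_eq_cosetRep_mul {r : Fin (m + 1) → G} (hr : IsMooreFamily r) {w : G}
    (hw : w ∈ closure (Set.range r)) :
    ∃ a, ∃ h ∈ closure (Set.range fun j : Fin m => r j.succ), w = cosetRep r a * h := by
  have step (i : Fin (m + 1)) (w : G)
      (ih : ∃ a, ∃ h ∈ closure (Set.range fun j : Fin m => r j.succ), w = cosetRep r a * h) :
      ∃ a, ∃ h ∈ closure (Set.range fun j : Fin m => r j.succ), r i * w = cosetRep r a * h := by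
    obtain ⟨a, h, hh, rfl⟩ := ih
    obtain ⟨k, hk, hka⟩ := hr.exists_mul_cosetRep i a
    exact ⟨_, _, mul_mem hk hh, by rw [← mul_assoc, hka, mul_assoc]⟩
  induction hw using closure_induction_left with
  | one => exact ⟨0, 1, one_mem _, by simp⟩
  | mul_left g hg w _ ih => obtain ⟨i, rfl⟩ := hg; exact step i w ih
  | inv_mul_cancel g hg w _ ih => obtain ⟨i, rfl⟩ := hg; rw [hr.inv_eq]; exact step i w ih

section Faithful

variable {α : Type*} [DecidableEq α] (ι : G →* Perm α)

open Subgroup in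
lemma mem_closure_tail {r : Fin (m + 1) → G} (hr : IsMooreFamily r) {v : Fin (m + 2) → α}
    (hv : Function.Injective v) (hι : ∀ i, ι (r i) = swap (v i.castSucc) (v i.succ)) {w : G}
    (hw : w ∈ closure (Set.range r)) (hfix : ι w (v 0) = v 0) :
    w ∈ closure (Set.range fun i : Fin m => r i.succ) := by
  have tail_le : closure (Set.range fun i : Fin m => r i.succ) ≤
      (MulAction.stabilizer (Perm α) (v 0)).comap ι := by
    rw [closure_le]
    rintro _ ⟨i, rfl⟩
    simp only [coe_comap, Set.mem_preimage, SetLike.mem_coe, MulAction.mem_stabilizer_iff, hι,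
      Equiv.Perm.smul_def]
    exact swap_apply_of_ne_of_ne (hv.ne (by simp [Fin.ext_iff])) (hv.ne (by simp [Fin.ext_iff]))
  obtain ⟨a, h, hh, rfl⟩ := hr.exists_eq_cosetRep_mul hw
  have hh0 : ι h (v 0) = v 0 := tail_le hh
  rw [map_mul, Equiv.Perm.mul_apply, hh0, map_cosetRep_apply_zero hι, hv.eq_iff] at hfix
  simpa [hfix] using hh

open Subgroup in
theorem eq_one_of_map_eq_one {r : Fin m → G} (hr : IsMooreFamily r) {v : Fin (m + 1) → α}
    (hv : Function.Injective v) (hι : ∀ i, ι (r i) = swap (v i.castSucc) (v i.succ)) {w : G}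
    (hw : w ∈ closure (Set.range r)) (h : ι w = 1) : w = 1 := by
  induction m with
  | zero => simpa using hw
  | succ m ih =>
    exact ih hr.tail (v := v ∘ Fin.succ) (hv.comp (Fin.succ_injective _)) (fun i => hι i.succ)
      (hr.mem_closure_tail ι hv hι hw (by simp [h]))

end Faithful

theorem exists_permHom {r : Fin m → G} (hr : IsMooreFamily r) :
    ∃ s : Perm (Fin (m + 1)) →* G, ∀ i : Fin m, s (swap i.castSucc i.succ) = r i := by
  let graph := Subgroup.closure
    (Set.range fun i : Fin m => (r i, (swap i.castSucc i.succ : Perm (Fin (m + 1)))))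
  let π : graph →* Perm (Fin (m + 1)) := (MonoidHom.snd _ _).comp graph.subtype
  have π_inj : Function.Injective π := (injective_iff_map_eq_one π).mpr fun w hw =>
    Subtype.ext <| (hr.prodMk isMooreFamily_swap).eq_one_of_map_eq_one (MonoidHom.snd _ _)
      Function.injective_id (fun _ => rfl) w.2 hw
  let gen (i : Fin m) : graph := ⟨_, Subgroup.subset_closure ⟨i, rfl⟩⟩
  have π_surj : Function.Surjective π := by
    rw [← MonoidHom.range_eq_top, eq_top_iff, ← closure_range_swap_castSucc_succ,
      Subgroup.closure_le]
    rintro _ ⟨i, rfl⟩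
    exact ⟨gen i, rfl⟩
  let e := MulEquiv.ofBijective π ⟨π_inj, π_surj⟩
  refine ⟨((MonoidHom.fst _ _).comp graph.subtype).comp e.symm.toMonoidHom, fun i => ?_⟩
  have e_symm_swap : e.symm (swap i.castSucc i.succ) = gen i := e.symm_apply_eq.mpr rfl
  simp [e_symm_swap, gen]

end IsMooreFamily

end Moore

section UVBFamily

variable {G : Type*} [Group G] {m : ℕ}

/-- The defining relations of `UVB_{m+1}`, as conditions on the images `σ i` and `ρ i` of the
generators. -/
structure IsUVBFamily (σ ρ : Fin m → G) : Prop where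
  moore : IsMooreFamily ρ
  braid {i j : Fin m} : (i : ℕ) + 1 = j → σ i * σ j * σ i = σ j * σ i * σ j
  rho_rho_sigma {i j : Fin m} : (i : ℕ) + 1 = j → ρ i * ρ j * σ i = σ j * ρ i * ρ j
  rho_sigma_sigma {i j : Fin m} : (i : ℕ) + 1 = j → ρ i * σ j * σ i = σ j * σ i * ρ j
  rho_sigma_sigma' {i j : Fin m} : (i : ℕ) + 1 = j → ρ j * σ i * σ j = σ i * σ j * ρ i
  sigma_commute {i j : Fin m} : (i : ℕ) + 2 ≤ j → Commute (σ i) (σ j)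
  sigma_rho_commute {i j : Fin m} :
    (i : ℕ) + 2 ≤ j ∨ (j : ℕ) + 2 ≤ i → Commute (σ i) (ρ j)

namespace UVB

lemma sigma_succ {m : ℕ} (i : Fin m) :
    sigma (m + 1) (i + 1) = PresentedGroup.of (Sum.inl i) :=
  dif_pos ⟨by omega, by simp⟩

lemma rho_succ {m : ℕ} (i : Fin m) : rho (m + 1) (i + 1) = PresentedGroup.of (Sum.inr i) :=
  dif_pos ⟨by omega, by simp⟩

open PresentedGroup in
lemma isUVBFamily_sigma_rho (m : ℕ) :
    IsUVBFamily (fun i : Fin m => sigma (m + 1) (i + 1)) fun i => rho (m + 1) (i + 1) := by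
  simp only [sigma_succ, rho_succ]
  exact
  { moore :=
      { mul_self i := one_of_mem (.inr (.inr ⟨i, rfl⟩))
        braid {i j} hij := mk_eq_mk_of_mul_inv_mem (.inl ⟨i, j, hij.symm, .inr (.inl rfl)⟩)
        commute {i j} hij :=
          mk_eq_mk_of_mul_inv_mem (.inr (.inl ⟨i, j, .inl hij, .inr (.inl rfl)⟩)) }
    braid {i j} hij := mk_eq_mk_of_mul_inv_mem (.inl ⟨i, j, hij.symm, .inl rfl⟩)
    rho_rho_sigma {i j} hij :=
      mk_eq_mk_of_mul_inv_mem (.inl ⟨i, j, hij.symm, .inr (.inr (.inl rfl))⟩)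
    rho_sigma_sigma {i j} hij :=
      mk_eq_mk_of_mul_inv_mem (.inl ⟨i, j, hij.symm, .inr (.inr (.inr (.inl rfl)))⟩)
    rho_sigma_sigma' {i j} hij :=
      mk_eq_mk_of_mul_inv_mem (.inl ⟨i, j, hij.symm, .inr (.inr (.inr (.inr rfl)))⟩)
    sigma_commute {i j} hij := mk_eq_mk_of_mul_inv_mem (.inr (.inl ⟨i, j, .inl hij, .inl rfl⟩))
    sigma_rho_commute {i j} hij :=
      mk_eq_mk_of_mul_inv_mem (.inr (.inl ⟨i, j, hij, .inr (.inr rfl)⟩)) }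

lemma hom_ext {F F' : UVB (m + 1) →* G}
    (hσ : ∀ i : Fin m, F (sigma (m + 1) (i + 1)) = F' (sigma (m + 1) (i + 1)))
    (hρ : ∀ i : Fin m, F (rho (m + 1) (i + 1)) = F' (rho (m + 1) (i + 1))) : F = F' := by
  simp only [sigma_succ, rho_succ] at hσ hρ
  exact PresentedGroup.ext (Sum.rec hσ hρ)

end UVB

namespace IsUVBFamily

variable {σ ρ : Fin m → G}

lemma lift_eq_one (h : IsUVBFamily σ ρ) (r : FreeGroup (UVBGen (m + 1)))
    (hr : r ∈ uvbRels (m + 1)) : FreeGroup.lift (Sum.elim σ ρ) r = 1 := by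
  have lift_sg (i : Fin m) : FreeGroup.lift (Sum.elim σ ρ) (UVBGen.sg (n := m + 1) i) = σ i :=
    FreeGroup.lift_apply_of
  have lift_rg (i : Fin m) : FreeGroup.lift (Sum.elim σ ρ) (UVBGen.rg (n := m + 1) i) = ρ i :=
    FreeGroup.lift_apply_of
  obtain ⟨i, j, hij, rfl | rfl | rfl | rfl | rfl⟩ | ⟨i, j, hij, rfl | rfl | rfl⟩ | ⟨i, rfl⟩ :=
    hr <;>
    simp only [map_mul, map_inv, lift_sg, lift_rg, mul_inv_eq_one]
  · exact h.braid hij.symm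
  · exact h.moore.braid hij.symm
  · exact h.rho_rho_sigma hij.symm
  · exact h.rho_sigma_sigma hij.symm
  · exact h.rho_sigma_sigma' hij.symm
  · exact hij.elim (fun hij => h.sigma_commute hij) fun hij => (h.sigma_commute hij).symm
  · exact hij.elim (fun hij => h.moore.commute hij) fun hij => (h.moore.commute hij).symm
  · exact h.sigma_rho_commute hij
  · exact h.moore.mul_self i

/-- The homomorphism out of `UVB_{m+1}` determined by a family satisfying its relations. -/
def lift (h : IsUVBFamily σ ρ) : UVB (m + 1) →* G :=
  PresentedGroup.toGroup h.lift_eq_one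

@[simp]
lemma lift_sigma (h : IsUVBFamily σ ρ) (i : Fin m) : h.lift (UVB.sigma (m + 1) (i + 1)) = σ i := by
  rw [UVB.sigma_succ]
  exact PresentedGroup.toGroup.of _

@[simp]
lemma lift_rho (h : IsUVBFamily σ ρ) (i : Fin m) : h.lift (UVB.rho (m + 1) (i + 1)) = ρ i := by
  rw [UVB.rho_succ]
  exact PresentedGroup.toGroup.of _

end IsUVBFamily

end UVBFamily

section PureFamily

variable {α G : Type*} [Group G]

/-- The defining relations of `UVP_n`, as conditions on the images `f a b` of the generators
`x_{a,b}`. The diagonal, where the paper has no generator, is filled with `1`. -/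
structure IsPureFamily (f : α → α → G) : Prop where
  diag (a : α) : f a a = 1
  commute {a b c d : α} : s(a, b) ≠ s(c, d) → Commute (f a b) (f c d)

namespace IsPureFamily

variable {f : α → α → G}

lemma comp {β : Type*} (hf : IsPureFamily f) {g : β → α} (hg : Function.Injective g) :
    IsPureFamily fun a b => f (g a) (g b) where
  diag a := hf.diag (g a)
  commute h := hf.commute ((Sym2.map.injective hg).ne h)

lemma map {H : Type*} [Group H] (hf : IsPureFamily f) (F : G →* H) :
    IsPureFamily fun a b => F (f a b) where
  diag a := by rw [hf.diag, map_one]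
  commute h := (hf.commute h).map F

end IsPureFamily

/-- The group presented by the generators and relations claimed for `UVP_n`. -/
abbrev PureGroup (n : ℕ) := PresentedGroup (uvpRels n)

namespace PureGroup

variable {n : ℕ}

/-- The generator `x_{a+1,b+1}` of `PureGroup n`, with the junk value `1` for `a = b`. -/
def gen (a b : Fin n) : PureGroup n :=
  if h : a = b then 1 else
    PresentedGroup.of ⟨(a + 1, b + 1), by simp [Fin.val_inj, h]⟩

lemma gen_of_ne {a b : Fin n} (h : a ≠ b) :
    gen a b = PresentedGroup.of ⟨(a + 1, b + 1), by simp [Fin.val_inj, h]⟩ :=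
  dif_neg h

lemma exists_of_eq_gen (p : UVPGen n) :
    ∃ a b : Fin n, p.1 = ((a : ℕ) + 1, (b : ℕ) + 1) ∧
      (PresentedGroup.of p : PureGroup n) = gen a b := by
  obtain ⟨⟨k, l⟩, hk, hkn, hl, hln, hkl⟩ := p
  dsimp only at hk hkn hl hln hkl
  obtain ⟨a, rfl⟩ := Nat.exists_eq_add_of_le' hk
  obtain ⟨b, rfl⟩ := Nat.exists_eq_add_of_le' hl
  have hab : (⟨a, hkn⟩ : Fin n) ≠ ⟨b, hln⟩ := by simpa using hkl
  exact ⟨⟨a, hkn⟩, ⟨b, hln⟩, rfl, (gen_of_ne hab).symm⟩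

lemma isPureFamily_gen (n : ℕ) : IsPureFamily (gen : Fin n → Fin n → PureGroup n) where
  diag a := dif_pos rfl
  commute {a b c d} h := by
    obtain rfl | hab := eq_or_ne a b
    · simp [gen]
    obtain rfl | hcd := eq_or_ne c d
    · simp [gen]
    rw [gen_of_ne hab, gen_of_ne hcd, ← commutatorElement_eq_one_iff_commute]
    refine PresentedGroup.one_of_mem ⟨_, _, ?_, rfl⟩
    simpa [Sym2.eq_iff, Fin.val_inj] using h

end PureGroup

namespace IsPureFamily

variable {n : ℕ} {f : Fin n → Fin n → G}

/-- The homomorphism out of `PureGroup n` determined by a family satisfying its relations. -/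
def lift (hf : IsPureFamily f) : PureGroup n →* G :=
  PresentedGroup.toGroup
    (f := fun p => f ⟨p.1.1 - 1, by have := p.2; omega⟩ ⟨p.1.2 - 1, by have := p.2; omega⟩) <| by
    rintro _ ⟨⟨⟨i, j⟩, hp⟩, ⟨⟨k, l⟩, hq⟩, hpq, rfl⟩
    rw [← commutatorElement_def, map_commutatorElement, commutatorElement_eq_one_iff_commute]
    simp only [FreeGroup.lift_apply_of]
    refine hf.commute ?_
    dsimp only at hp hq hpq
    simp only [ne_eq, Sym2.eq_iff, Fin.mk.injEq]
    omega

@[simp]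
lemma lift_gen (hf : IsPureFamily f) (a b : Fin n) : hf.lift (PureGroup.gen a b) = f a b := by
  obtain rfl | hab := eq_or_ne a b
  · simp [PureGroup.gen, hf.diag]
  · rw [PureGroup.gen_of_ne hab]
    exact PresentedGroup.toGroup.of _

end IsPureFamily

namespace PureGroup

variable {n : ℕ}

lemma hom_ext {F F' : PureGroup n →* G} (h : ∀ a b, F (gen a b) = F' (gen a b)) : F = F' :=
  PresentedGroup.ext fun p => by
    obtain ⟨a, b, -, hp⟩ := exists_of_eq_gen p
    rw [hp, h]

/-- The endomorphism of `PureGroup n` permuting the indices of the generators. -/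
def permute (π : Perm (Fin n)) : PureGroup n →* PureGroup n :=
  ((isPureFamily_gen n).comp π.injective).lift

@[simp]
lemma permute_gen (π : Perm (Fin n)) (a b : Fin n) :
    permute π (gen a b) = gen (π a) (π b) :=
  IsPureFamily.lift_gen _ a b

lemma permute_one : permute (1 : Perm (Fin n)) = MonoidHom.id (PureGroup n) :=
  hom_ext fun a b => by simp

lemma permute_mul (π τ : Perm (Fin n)) : permute (π * τ) = (permute π).comp (permute τ) :=
  hom_ext fun a b => by simp

instance : MulDistribMulAction (Perm (Fin n)) (PureGroup n) where
  smul π := permute π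
  one_smul := DFunLike.congr_fun permute_one
  mul_smul π τ := DFunLike.congr_fun (permute_mul π τ)
  smul_mul π := map_mul (permute π)
  smul_one π := map_one (permute π)

@[simp]
lemma smul_gen (π : Perm (Fin n)) (a b : Fin n) : π • gen a b = gen (π a) (π b) :=
  permute_gen π a b

end PureGroup

end PureFamily

section TwistedBraidRelations

variable {G : Type*} [Group G] {p q a b c : G}

lemma mul_inv_mul_of_mul_eq (h : p * b = c * p) (z : G) :
    p * (b⁻¹ * z) = c⁻¹ * (p * z) := by
  rw [eq_inv_mul_iff_mul_eq, ← mul_assoc, ← h, mul_assoc, mul_inv_cancel_left]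

lemma mul_eq_of_mul_eq_of_mul_self (hp : p * p = 1) (h : p * b = c * p) : p * c = b * p := by
  have hp' : p⁻¹ = p := inv_eq_of_mul_eq_one_left hp
  rw [← hp', inv_mul_eq_iff_eq_mul, ← mul_assoc, h, mul_assoc, hp', hp, mul_one]

/-- Moving `a`, `b` and `c` to the left of `p` and `q` turns both sides of each relation into a word
in `a⁻¹`, `b⁻¹`, `c⁻¹` followed by `p * q * p`. -/
lemma twisted_braid_relations_iff (hp : p * p = 1) (hq : q * q = 1)
    (hpq : p * q * p = q * p * q) (hb : p * b = c * p) (ha : q * a = c * q) :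
    (a⁻¹ * p * (b⁻¹ * q) * (a⁻¹ * p) = b⁻¹ * q * (a⁻¹ * p) * (b⁻¹ * q) ∧
      p * (b⁻¹ * q) * (a⁻¹ * p) = b⁻¹ * q * (a⁻¹ * p) * q ∧
      q * (a⁻¹ * p) * (b⁻¹ * q) = a⁻¹ * p * (b⁻¹ * q) * p) ↔
    Commute a b ∧ Commute a c ∧ Commute b c := by
  have pb := mul_inv_mul_of_mul_eq hb
  have pc := mul_inv_mul_of_mul_eq (mul_eq_of_mul_eq_of_mul_self hp hb)
  have qa := mul_inv_mul_of_mul_eq ha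
  have qc := mul_inv_mul_of_mul_eq (mul_eq_of_mul_eq_of_mul_self hq ha)
  rw [mul_assoc, mul_assoc] at hpq
  simp only [mul_assoc, pb, pc, qa, qc, hpq]
  simp only [← mul_assoc, mul_left_inj]
  rw [← Commute.inv_inv_iff (a := a) (b := b), ← Commute.inv_inv_iff (a := a) (b := c),
    ← Commute.inv_inv_iff (a := b) (b := c)]
  constructor
  · rintro ⟨hacb, hcb, hca⟩
    refine ⟨?_, hca.symm, hcb.symm⟩
    rw [← hca, ← hcb, mul_assoc, mul_assoc] at hacb
    exact mul_left_cancel hacb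
  · rintro ⟨hab, hac, hbc⟩
    exact ⟨by rw [hac.eq, hbc.eq, mul_assoc, hab.eq, mul_assoc], hbc.eq.symm, hac.eq.symm⟩

end TwistedBraidRelations

section Equivariant

variable {α G H : Type*} [Group G] [Group H]

/-- A family indexed by ordered pairs on which conjugation by the elements `s π` acts by applying
`π` to both indices. -/
def IsEquivariant (s : Perm α →* G) (f : α → α → G) : Prop :=
  ∀ (π : Perm α) (a b : α), s π * f a b * (s π)⁻¹ = f (π a) (π b)

namespace IsEquivariant

variable {s : Perm α →* G} {f : α → α → G}

lemma mul_eq (hf : IsEquivariant s f) (π : Perm α) (a b : α) :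
    s π * f a b = f (π a) (π b) * s π :=
  mul_inv_eq_iff_eq_mul.mp (hf π a b)

lemma commute_of_apply_eq (hf : IsEquivariant s f) {π : Perm α} {a b : α} (ha : π a = a)
    (hb : π b = b) : Commute (s π) (f a b) := by
  have h := hf.mul_eq π a b
  rwa [ha, hb] at h

lemma map (hf : IsEquivariant s f) (F : G →* H) :
    IsEquivariant (F.comp s) fun a b => F (f a b) := fun π a b => by
  simp only [← hf π a b, map_mul, map_inv, MonoidHom.comp_apply]

lemma commute_of_commute {ι : Type*} [Finite ι] (hf : IsEquivariant s f) {u v : ι → α}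
    (hu : Function.Injective u) (hv : Function.Injective v) {i j k l : ι}
    (h : Commute (f (u i) (u j)) (f (u k) (u l))) : Commute (f (v i) (v j)) (f (v k) (v l)) := by
  obtain ⟨π, hπ⟩ := Perm.exists_extending_pair u v hu hv
  simpa only [MulEquiv.coe_toMonoidHom, MulAut.conj_apply, hf π, hπ] using
    h.map (MulAut.conj (s π)).toMonoidHom

end IsEquivariant

lemma exists_perm_map_pair {x y a b : α} (hxy : x ≠ y) (hab : a ≠ b) :
    ∃ π : Perm α, π x = a ∧ π y = b := by
  obtain ⟨π, hπ⟩ := Perm.exists_extending_pair _ _ (injective_pair_iff_ne.mpr hxy)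
    (injective_pair_iff_ne.mpr hab)
  exact ⟨π, hπ 0, hπ 1⟩

lemma IsEquivariant.ext {s : Perm α →* G} {f g : α → α → G} (hf : IsEquivariant s f)
    (hg : IsEquivariant s g) (hdiag : ∀ a, f a a = g a a) {x y : α} (hxy : x ≠ y)
    (h : f x y = g x y) : f = g := by
  funext a b
  obtain rfl | hab := eq_or_ne a b
  · exact hdiag a
  · obtain ⟨π, rfl, rfl⟩ := exists_perm_map_pair hxy hab
    rw [← hf, ← hg, h]

lemma exists_isEquivariant (s : Perm α →* G) {x y : α} (hxy : x ≠ y) {g : G}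
    (hg : ∀ π : Perm α, π x = x → π y = y → Commute (s π) g) :
    ∃ f : α → α → G, IsEquivariant s f ∧ (∀ a, f a a = 1) ∧ f x y = g := by
  classical
  choose π hπ using fun (a b : α) (hab : a ≠ b) => exists_perm_map_pair hxy hab
  let f (a b : α) : G := if hab : a = b then 1 else s (π a b hab) * g * (s (π a b hab))⁻¹
  have f_apply (τ : Perm α) : f (τ x) (τ y) = s τ * g * (s τ)⁻¹ := by
    have hτ : τ x ≠ τ y := τ.injective.ne hxy
    have hcomm := hg (τ⁻¹ * π _ _ hτ) (by simp [hπ _ _ hτ]) (by simp [hπ _ _ hτ])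
    have hconj := mul_inv_eq_of_eq_mul hcomm.eq
    simp only [f, dif_neg hτ]
    conv_rhs => rw [← hconj]
    simp [mul_assoc]
  refine ⟨f, fun τ a b => ?_, fun a => dif_pos rfl, by simpa using f_apply 1⟩
  obtain rfl | hab := eq_or_ne a b
  · simp [f]
  · obtain ⟨τ', rfl, rfl⟩ := exists_perm_map_pair hxy hab
    rw [f_apply, ← Perm.mul_apply, ← Perm.mul_apply, f_apply, map_mul]
    group

section AdjacentTranspositions

variable {m : ℕ} {s : Perm (Fin (m + 1)) →* G} {f : Fin (m + 1) → Fin (m + 1) → G}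
  {σ ρ : Fin m → G} {i j : Fin m}

lemma IsEquivariant.braid_relations_iff (hf : IsEquivariant s f)
    (hρ : ∀ i : Fin m, ρ i = s (swap i.castSucc i.succ))
    (hσ : ∀ i : Fin m, σ i = (f i.castSucc i.succ)⁻¹ * ρ i) (hij : (i : ℕ) + 1 = j) :
    (σ i * σ j * σ i = σ j * σ i * σ j ∧ ρ i * σ j * σ i = σ j * σ i * ρ j ∧
        ρ j * σ i * σ j = σ i * σ j * ρ i) ↔
      Commute (f i.castSucc i.succ) (f i.succ j.succ) ∧
        Commute (f i.castSucc i.succ) (f i.castSucc j.succ) ∧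
        Commute (f i.succ j.succ) (f i.castSucc j.succ) := by
  obtain ⟨hxy, hxz, hyz⟩ := castSucc_ne_succ_and_ne hij
  rw [hσ i, hσ j, hρ i, hρ j, castSucc_eq_succ hij]
  refine twisted_braid_relations_iff ?_ ?_ ?_ ?_ ?_
  · rw [← map_mul, Equiv.swap_mul_self, map_one]
  · rw [← map_mul, Equiv.swap_mul_self, map_one]
  · simp only [← map_mul, swap_braid hxy hxz hyz]
  · rw [hf.mul_eq, swap_apply_right, swap_apply_of_ne_of_ne hxz.symm hyz.symm]
  · rw [hf.mul_eq, swap_apply_left, swap_apply_of_ne_of_ne hxy hxz]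

lemma swap_mul_swap_apply (hij : (i : ℕ) + 1 = j) :
    (swap i.castSucc i.succ * swap j.castSucc j.succ) i.castSucc = j.castSucc ∧
      (swap i.castSucc i.succ * swap j.castSucc j.succ) i.succ = j.succ := by
  obtain ⟨hxy, hxz, hyz⟩ := castSucc_ne_succ_and_ne hij
  rw [castSucc_eq_succ hij, Perm.mul_apply, Perm.mul_apply, swap_apply_of_ne_of_ne hxy hxz,
    swap_apply_left, swap_apply_left, swap_apply_of_ne_of_ne hxz.symm hyz.symm]
  exact ⟨rfl, rfl⟩

lemma IsEquivariant.conj_conj (hf : IsEquivariant s f)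
    (hρ : ∀ i : Fin m, ρ i = s (swap i.castSucc i.succ)) (hij : (i : ℕ) + 1 = j) :
    ρ i * ρ j * f i.castSucc i.succ = f j.castSucc j.succ * (ρ i * ρ j) := by
  rw [hρ, hρ, ← map_mul, hf.mul_eq, (swap_mul_swap_apply hij).1, (swap_mul_swap_apply hij).2]

lemma swap_castSucc_succ_apply_of_far (hij : (i : ℕ) + 2 ≤ j ∨ (j : ℕ) + 2 ≤ i) :
    swap j.castSucc j.succ i.castSucc = i.castSucc ∧ swap j.castSucc j.succ i.succ = i.succ := by
  constructor <;> apply swap_apply_of_ne_of_ne <;> simp only [ne_eq, Fin.ext_iff, Fin.val_castSucc,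
    Fin.val_succ] <;> omega

theorem IsEquivariant.isUVBFamily (hf : IsEquivariant s f) (hpure : IsPureFamily f) :
    IsUVBFamily (fun i : Fin m => (f i.castSucc i.succ)⁻¹ * s (swap i.castSucc i.succ))
      (fun i : Fin m => s (swap i.castSucc i.succ)) := by
  have moore : IsMooreFamily fun i : Fin m => s (swap i.castSucc i.succ) :=
    isMooreFamily_swap.map s
  have braids {i j : Fin m} (hij : (i : ℕ) + 1 = j) := by
    obtain ⟨hxy, hxz, hyz⟩ := castSucc_ne_succ_and_ne hij
    exact (hf.braid_relations_iff (fun _ => rfl) (fun _ => rfl) hij).mpr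
      ⟨hpure.commute (by simp [hxy, hxz]), hpure.commute (by simp [hxz, hyz]),
        hpure.commute (by simp [hxy.symm, hyz])⟩
  have far {i j : Fin m} (hij : (i : ℕ) + 2 ≤ j ∨ (j : ℕ) + 2 ≤ i) :
      Commute (s (swap j.castSucc j.succ)) (f i.castSucc i.succ) :=
    hf.commute_of_apply_eq (swap_castSucc_succ_apply_of_far hij).1
      (swap_castSucc_succ_apply_of_far hij).2
  exact
  { moore
    braid hij := (braids hij).1
    rho_sigma_sigma hij := (braids hij).2.1
    rho_sigma_sigma' hij := (braids hij).2.2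
    rho_rho_sigma {i j} hij := by
      have hconj := mul_inv_mul_of_mul_eq (hf.conj_conj (fun _ => rfl) hij)
      rw [hconj, moore.braid hij]
      simp only [mul_assoc]
    sigma_commute {i j} hij := by
      have hff : Commute (f i.castSucc i.succ) (f j.castSucc j.succ) :=
        hpure.commute <| by
          simp only [ne_eq, Sym2.eq_iff, Fin.ext_iff, Fin.val_castSucc, Fin.val_succ]
          omega
      exact ((hff.inv_inv).mul_right (far (.inl hij)).symm.inv_left).mul_left
        ((far (.inr hij)).inv_right.mul_right (moore.commute hij))
    sigma_rho_commute {i j} hij :=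
      (far hij).symm.inv_left.mul_left <| hij.elim (fun hij => moore.commute hij)
        fun hij => (moore.commute hij).symm }

end AdjacentTranspositions

end Equivariant

section PureFamilyOfUVBFamily

lemma mem_closure_swap_of_apply_zero_one {m : ℕ} {π : Perm (Fin (m + 2))} (h0 : π 0 = 0)
    (h1 : π 1 = 1) : π ∈ Subgroup.closure
      {τ | ∃ i : Fin (m + 1), 2 ≤ (i : ℕ) ∧ swap i.castSucc i.succ = τ} := by
  have mem_top := closure_range_swap_castSucc_succ (m + 1) ▸ Subgroup.mem_top π
  have mem_tail := isMooreFamily_swap.mem_closure_tail (MonoidHom.id _) Function.injective_id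
    (fun _ => rfl) mem_top h0
  cases m with
  | zero => simp_all
  | succ m =>
    refine Subgroup.closure_mono ?_ <| isMooreFamily_swap.tail.mem_closure_tail (MonoidHom.id _)
      (Fin.succ_injective _) (fun _ => rfl) mem_tail h1
    rintro _ ⟨i, rfl⟩
    exact ⟨i.succ.succ, by simp, rfl⟩

variable {α G : Type*} [Group G]

lemma isPureFamily_of_pairwise_ne {f : α → α → G} (diag : ∀ a, f a a = 1)
    (commute_triple : ∀ {a b c : α}, a ≠ b → a ≠ c → b ≠ c → Commute (f a b) (f b c) ∧
      Commute (f a b) (f a c) ∧ Commute (f b c) (f a c))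
    (commute_disjoint : ∀ {a b c d : α}, a ≠ b → a ≠ c → a ≠ d → b ≠ c → b ≠ d → c ≠ d →
      Commute (f a b) (f c d)) : IsPureFamily f where
  diag := diag
  commute {a b c d} h := by
    simp only [ne_eq, Sym2.eq_iff, not_or, not_and] at h
    obtain rfl | hab := eq_or_ne a b
    · simp [diag]
    obtain rfl | hcd := eq_or_ne c d
    · simp [diag]
    obtain rfl | hac := eq_or_ne a c
    · exact (commute_triple hab hcd (h.1 rfl)).2.1
    obtain rfl | had := eq_or_ne a d
    · exact (commute_triple hac.symm (Ne.symm (h.2 rfl)) hab).1.symm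
    obtain rfl | hbc := eq_or_ne b c
    · exact (commute_triple hab had hcd).1
    obtain rfl | hbd := eq_or_ne b d
    · exact (commute_triple hac hab hbc.symm).2.2.symm
    · exact commute_disjoint hab hac had hbc hbd hcd

namespace IsUVBFamily

variable {m : ℕ} {σ ρ : Fin (m + 1) → G} {s : Perm (Fin (m + 2)) →* G}
  {f : Fin (m + 2) → Fin (m + 2) → G}

lemma commute_of_apply_zero_one (h : IsUVBFamily σ ρ)
    (hs : ∀ i, s (swap i.castSucc i.succ) = ρ i) {π : Perm (Fin (m + 2))} (h0 : π 0 = 0)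
    (h1 : π 1 = 1) : Commute (s π) (ρ 0 * (σ 0)⁻¹) := by
  have le_centralizer : Subgroup.closure
      {τ | ∃ i : Fin (m + 1), 2 ≤ (i : ℕ) ∧ swap i.castSucc i.succ = τ} ≤
        (Subgroup.centralizer {ρ 0 * (σ 0)⁻¹}).comap s := by
    rw [Subgroup.closure_le]
    rintro _ ⟨i, hi, rfl⟩
    have h0i : ((0 : Fin (m + 1)) : ℕ) + 2 ≤ i := by simpa using hi
    rw [SetLike.mem_coe, Subgroup.mem_comap, Subgroup.mem_centralizer_singleton_iff, hs]
    exact (h.moore.commute h0i).symm.mul_right (h.sigma_rho_commute (.inl h0i)).symm.inv_right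
  exact Subgroup.mem_centralizer_singleton_iff.mp
    (le_centralizer (mem_closure_swap_of_apply_zero_one h0 h1))

lemma apply_castSucc_succ (h : IsUVBFamily σ ρ) (hs : ∀ i, s (swap i.castSucc i.succ) = ρ i)
    (hf : IsEquivariant s f) (hf01 : f 0 1 = ρ 0 * (σ 0)⁻¹) (i : Fin (m + 1)) :
    f i.castSucc i.succ = ρ i * (σ i)⁻¹ := by
  induction i using Fin.induction with
  | zero => exact hf01
  | succ i ih =>
    have hij : (i.castSucc : ℕ) + 1 = i.succ := by simp
    have hconj := hf.conj_conj (fun i => (hs i).symm) hij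
    have hσ : SemiconjBy (ρ i.castSucc * ρ i.succ) (σ i.castSucc)⁻¹ (σ i.succ)⁻¹ :=
      SemiconjBy.inv_right ((h.rho_rho_sigma hij).trans (mul_assoc _ _ _))
    refine mul_right_cancel (hconj.symm.trans ?_)
    calc
      _ = ρ i.castSucc * ρ i.succ * ρ i.castSucc * (σ i.castSucc)⁻¹ := by
        simp only [ih, mul_assoc]
      _ = ρ i.succ * (ρ i.castSucc * ρ i.succ * (σ i.castSucc)⁻¹) := by
        rw [h.moore.braid hij]; simp only [mul_assoc]
      _ = ρ i.succ * (σ i.succ)⁻¹ * (ρ i.castSucc * ρ i.succ) := by rw [hσ.eq, mul_assoc]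

lemma isPureFamily (h : IsUVBFamily σ ρ) (hs : ∀ i, s (swap i.castSucc i.succ) = ρ i)
    (hf : IsEquivariant s f) (diag : ∀ a, f a a = 1)
    (hf_succ : ∀ i, f i.castSucc i.succ = ρ i * (σ i)⁻¹) : IsPureFamily f := by
  refine isPureFamily_of_pairwise_ne diag (fun {a b c} hab hac hbc => ?_)
    fun {a b c d} hab hac had hbc hbd hcd => ?_
  · have hv : Function.Injective ![a, b, c] := by
      simp [← List.nodup_ofFn, *]
    have hm : 3 ≤ m + 2 := by simpa using Fintype.card_le_of_injective _ hv
    let i : Fin (m + 1) := ⟨0, by omega⟩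
    let j : Fin (m + 1) := ⟨1, by omega⟩
    have hu : Function.Injective ![i.castSucc, i.succ, j.succ] := by
      simp [← List.nodup_ofFn, Fin.ext_iff, i, j]
    have hσ (i : Fin (m + 1)) : σ i = (f i.castSucc i.succ)⁻¹ * ρ i := by simp [hf_succ]
    have hij : (i : ℕ) + 1 = j := rfl
    obtain ⟨h12, h13, h23⟩ := (hf.braid_relations_iff (fun i => (hs i).symm) hσ hij).mp
      ⟨h.braid hij, h.rho_sigma_sigma hij, h.rho_sigma_sigma' hij⟩
    exact ⟨hf.commute_of_commute hu hv (i := 0) (j := 1) (k := 1) (l := 2) h12,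
      hf.commute_of_commute hu hv (i := 0) (j := 1) (k := 0) (l := 2) h13,
      hf.commute_of_commute hu hv (i := 1) (j := 2) (k := 0) (l := 2) h23⟩
  · have hv : Function.Injective ![a, b, c, d] := by
      simp [← List.nodup_ofFn, *]
    have hm : 4 ≤ m + 2 := by simpa using Fintype.card_le_of_injective _ hv
    let i : Fin (m + 1) := ⟨0, by omega⟩
    let j : Fin (m + 1) := ⟨2, by omega⟩
    have hu : Function.Injective ![i.castSucc, i.succ, j.castSucc, j.succ] := by
      simp [← List.nodup_ofFn, Fin.ext_iff, i, j]
    have hij : (i : ℕ) + 2 ≤ j := le_rfl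
    have hji : Commute (σ j) (ρ i) := h.sigma_rho_commute (.inr hij)
    have hfar : Commute (ρ i * (σ i)⁻¹) (ρ j * (σ j)⁻¹) :=
      ((h.moore.commute hij).mul_right hji.symm.inv_right).mul_left
        ((h.sigma_rho_commute (.inl hij)).inv_left.mul_right (h.sigma_commute hij).inv_inv)
    rw [← hf_succ, ← hf_succ] at hfar
    exact hf.commute_of_commute hu hv (i := 0) (j := 1) (k := 2) (l := 3) hfar

theorem exists_isPureFamily (h : IsUVBFamily σ ρ) (hs : ∀ i, s (swap i.castSucc i.succ) = ρ i) :
    ∃ f : Fin (m + 2) → Fin (m + 2) → G, IsEquivariant s f ∧ IsPureFamily f ∧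
      ∀ i, f i.castSucc i.succ = ρ i * (σ i)⁻¹ := by
  obtain ⟨f, hf, diag, hf01⟩ := exists_isEquivariant s (zero_ne_one' (Fin (m + 2)))
    fun π h0 h1 => h.commute_of_apply_zero_one hs h0 h1
  have hf_succ := h.apply_castSucc_succ hs hf hf01
  exact ⟨f, hf, h.isPureFamily hs hf diag hf_succ, hf_succ⟩

end IsUVBFamily

end PureFamilyOfUVBFamily

namespace UVB

lemma lam_self (n i : ℕ) : lam n i i = 1 := by
  simp [lam]

lemma lam_succ_right (n i : ℕ) : lam n i (i + 1) = rho n i * (sigma n i)⁻¹ := by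
  simp [lam]

lemma lam_succ_left (n i : ℕ) : lam n (i + 1) i = (sigma n i)⁻¹ * rho n i := by
  simp [lam]

lemma lam_succ_right_of_lt (n : ℕ) {i j : ℕ} (h : i < j) :
    lam n i (j + 1) = rho n j * lam n i j * rho n j := by
  have hlen : j - i = (j - 1 - i) + 1 := by omega
  have hlast : i + 1 + (j - 1 - i) = j := by omega
  simp [lam, h, h.trans (Nat.lt_succ_self j), hlen, hlast, List.range'_1_concat, mul_assoc]

lemma lam_succ_left_of_lt (n : ℕ) {i j : ℕ} (h : i < j) :
    lam n (j + 1) i = rho n j * lam n j i * rho n j := by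
  have hlen : j - i = (j - 1 - i) + 1 := by omega
  have hlast : i + 1 + (j - 1 - i) = j := by omega
  simp [lam, h, h.trans (Nat.lt_succ_self j), h.not_gt, (h.trans (Nat.lt_succ_self j)).not_gt,
    hlen, hlast, List.range'_1_concat, mul_assoc]

variable {m : ℕ} {s : Perm (Fin (m + 1)) →* UVB (m + 1)}
  {f : Fin (m + 1) → Fin (m + 1) → UVB (m + 1)}

lemma lam_eq_and_lam_eq_of_lt (hs : ∀ i : Fin m, s (swap i.castSucc i.succ) = rho (m + 1) (i + 1))
    (hf : IsEquivariant s f)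
    (hf_succ : ∀ i : Fin m,
      f i.castSucc i.succ = rho (m + 1) (i + 1) * (sigma (m + 1) (i + 1))⁻¹)
    {a b : Fin (m + 1)} (hab : a < b) :
    lam (m + 1) (a + 1) (b + 1) = f a b ∧ lam (m + 1) (b + 1) (a + 1) = f b a := by
  induction b using Fin.induction with
  | zero => exact absurd hab (Fin.not_lt_zero a)
  | succ j ih =>
    have conj_rho (c d : Fin (m + 1)) : rho (m + 1) (j + 1) * f c d * rho (m + 1) (j + 1) =
        f (swap j.castSucc j.succ c) (swap j.castSucc j.succ d) := by
      rw [← hf, ← hs, ← map_inv, Equiv.swap_inv]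
    obtain rfl | haj := (Fin.le_castSucc_iff.mpr hab).eq_or_lt
    · refine ⟨(lam_succ_right _ _).trans (hf_succ j).symm, ?_⟩
      have hconj := conj_rho j.castSucc j.succ
      have mul_self : rho (m + 1) (j + 1) * rho (m + 1) (j + 1) = 1 := by
        rw [← hs, ← map_mul, Equiv.swap_mul_self, map_one]
      rw [swap_apply_left, swap_apply_right, hf_succ, ← mul_assoc, mul_self, one_mul] at hconj
      exact (lam_succ_left _ _).trans hconj
    · have hswap : swap j.castSucc j.succ a = a := swap_apply_of_ne_of_ne haj.ne hab.ne
      have haj' : (a : ℕ) + 1 < j + 1 := by simpa [Fin.lt_def] using haj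
      obtain ⟨h_right, h_left⟩ := ih haj
      rw [Fin.val_castSucc] at h_right h_left
      rw [Fin.val_succ, lam_succ_right_of_lt _ haj', lam_succ_left_of_lt _ haj', h_right, h_left,
        conj_rho, conj_rho, hswap, swap_apply_left]
      exact ⟨rfl, rfl⟩

lemma lam_eq (hs : ∀ i : Fin m, s (swap i.castSucc i.succ) = rho (m + 1) (i + 1))
    (hf : IsEquivariant s f) (diag : ∀ a, f a a = 1)
    (hf_succ : ∀ i : Fin m,
      f i.castSucc i.succ = rho (m + 1) (i + 1) * (sigma (m + 1) (i + 1))⁻¹)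
    (a b : Fin (m + 1)) : lam (m + 1) (a + 1) (b + 1) = f a b := by
  obtain hab | rfl | hba := lt_trichotomy a b
  · exact (lam_eq_and_lam_eq_of_lt hs hf hf_succ hab).1
  · rw [lam_self, diag]
  · exact (lam_eq_and_lam_eq_of_lt hs hf hf_succ hba).2

end UVB

section SemidirectProduct

open SemidirectProduct

/-- The semidirect product in which `S_n` permutes the indices of the generators of
`PureGroup n`. -/
abbrev PureSemidirect (n : ℕ) :=
  PureGroup n ⋊[MulDistribMulAction.toMulAut (Perm (Fin n)) (PureGroup n)] Perm (Fin n)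

lemma isEquivariant_inl_gen (n : ℕ) :
    IsEquivariant (inr : Perm (Fin n) →* PureSemidirect n) fun a b => inl (PureGroup.gen a b) :=
  fun π a b => by
    rw [← map_inv, ← inl_aut, MulDistribMulAction.toMulAut_apply,
      MulDistribMulAction.toMulEquiv_apply, PureGroup.smul_gen]

lemma monoidHom_eq_of_swap_castSucc_succ {m : ℕ} {G : Type*} [Group G]
    {s t : Perm (Fin (m + 1)) →* G}
    (h : ∀ i : Fin m, s (swap i.castSucc i.succ) = t (swap i.castSucc i.succ)) : s = t :=
  MonoidHom.eq_of_eqOn_dense (closure_range_swap_castSucc_succ m) <| by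
    rintro _ ⟨i, rfl⟩
    exact h i

namespace UVB

theorem exists_mulEquiv_pureSemidirect (m : ℕ) :
    ∃ e : UVB (m + 2) ≃* PureSemidirect (m + 2),
      (∀ i : Fin (m + 1), e (sigma (m + 2) (i + 1)) =
        (inl (PureGroup.gen i.castSucc i.succ))⁻¹ * inr (swap i.castSucc i.succ)) ∧
      (∀ i : Fin (m + 1), e (rho (m + 2) (i + 1)) = inr (swap i.castSucc i.succ)) ∧
      ∀ a b, e.symm (inl (PureGroup.gen a b)) = lam (m + 2) (a + 1) (b + 1) := by
  obtain ⟨s, hs⟩ := (isUVBFamily_sigma_rho (m + 1)).moore.exists_permHom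
  obtain ⟨f, hf, hpure, hf_succ⟩ := (isUVBFamily_sigma_rho (m + 1)).exists_isPureFamily hs
  have hgen := isEquivariant_inl_gen (m + 2)
  have hψ := hgen.isUVBFamily ((PureGroup.isPureFamily_gen (m + 2)).map inl)
  let θ : PureSemidirect (m + 2) →* UVB (m + 2) :=
    SemidirectProduct.lift hpure.lift s fun π => PureGroup.hom_ext fun a b => by
      simp [hf π a b]
  have ψ_s : hψ.lift.comp s = inr :=
    monoidHom_eq_of_swap_castSucc_succ fun i => by simp [hs]
  have ψ_f : (fun a b => hψ.lift (f a b)) = fun a b => inl (PureGroup.gen a b) :=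
    (ψ_s ▸ hf.map hψ.lift).ext hgen (fun a => by simp [hpure.diag, PureGroup.gen])
      (Fin.castSucc_lt_succ (i := 0)).ne <| by
        simp only [hf_succ, map_mul, map_inv, hψ.lift_sigma, hψ.lift_rho, mul_inv_rev,
          mul_inv_cancel_left, inv_inv]
  have θ_ψ : θ.comp hψ.lift = MonoidHom.id _ := hom_ext (fun i => by simp [θ, hs, hf_succ])
    (fun i => by simp [θ, hs])
  have ψ_θ : hψ.lift.comp θ = MonoidHom.id _ := SemidirectProduct.hom_ext
    (PureGroup.hom_ext fun a b => by simpa [θ] using congr_fun₂ ψ_f a b)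
    (by simpa [θ, MonoidHom.comp_assoc] using ψ_s)
  refine ⟨MonoidHom.toMulEquiv hψ.lift θ θ_ψ ψ_θ, hψ.lift_sigma, hψ.lift_rho, fun a b => ?_⟩
  rw [lam_eq hs hf hpure.diag hf_succ]
  simp [θ]

end UVB

lemma IsIota.eq_rightHom_comp {m : ℕ} {ι : UVB (m + 1) →* Perm (Fin (m + 1))}
    (hι : IsIota (m + 1) ι) {e : UVB (m + 1) →* PureSemidirect (m + 1)}
    (e_sigma : ∀ i : Fin m, e (UVB.sigma (m + 1) (i + 1)) =
      (inl (PureGroup.gen i.castSucc i.succ))⁻¹ * inr (swap i.castSucc i.succ))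
    (e_rho : ∀ i : Fin m, e (UVB.rho (m + 1) (i + 1)) = inr (swap i.castSucc i.succ)) :
    ι = rightHom.comp e := by
  have ι_gen (i : Fin m) : ι (UVB.sigma (m + 1) (i + 1)) = swap i.castSucc i.succ ∧
      ι (UVB.rho (m + 1) (i + 1)) = swap i.castSucc i.succ :=
    hι (i + 1) (Nat.le_add_left 1 i) i.isLt
  exact UVB.hom_ext (fun i => by simp [ι_gen, e_sigma]) fun i => by simp [ι_gen, e_rho]

end SemidirectProduct

/-- For `n ≥ 2`, the homomorphism from the group presented by the
generators x_{k,l} (1 ≤ k ≠ l ≤ n) and the relations "x_{i,j} commutes with x_{k,l}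
whenever {i,j} ≠ {k,l}" to `UVB n`, sending x_{k,l} to λ_{k,l}, is injective with
image exactly `UVP n = ker ι`. -/
theorem statement0 (n : ℕ) (hn : 2 ≤ n)
    (ι : UVB n →* Equiv.Perm (Fin n)) (hι : IsIota n ι) :
    ∃ φ : PresentedGroup (uvpRels n) →* UVB n,
      (∀ p : UVPGen n, φ (PresentedGroup.of p) = UVB.lam n p.1.1 p.1.2) ∧
      Function.Injective φ ∧ φ.range = ι.ker := by
  obtain ⟨m, rfl⟩ := Nat.exists_eq_add_of_le' hn
  obtain ⟨e, e_sigma, e_rho, e_symm_gen⟩ := UVB.exists_mulEquiv_pureSemidirect m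
  have ι_eq : ι = SemidirectProduct.rightHom.comp e.toMonoidHom :=
    hι.eq_rightHom_comp e_sigma e_rho
  refine ⟨e.symm.toMonoidHom.comp SemidirectProduct.inl, fun p => ?_,
    e.symm.injective.comp SemidirectProduct.inl_injective, ?_⟩
  · obtain ⟨a, b, hp, hgen⟩ := PureGroup.exists_of_eq_gen p
    rw [MonoidHom.comp_apply, hgen, hp]
    exact e_symm_gen a b
  · rw [MonoidHom.range_comp, SemidirectProduct.range_inl_eq_ker_rightHom, ι_eq,
      ← MonoidHom.comap_ker]
    exact Subgroup.map_equiv_eq_comap_symm e.symm _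
end

section
/- Let n ≥ 2. For each unordered pair {i,j} with 1 ≤ i < j ≤ n, the subgroup ⟨λ_{i,j}, λ_{j,i}⟩ of UVP_n is a free group of rank 2 freely generated by λ_{i,j} and λ_{j,i}; these n(n−1)/2 subgroups pairwise commute elementwise; and UVP_n is their internal direct product. Consequently UVP_n is isomorphic to the direct product, over all unordered pairs {i,j} ⊆ {1,…,n}, of free groups of rank 2. -/
/-! ## Statement 1 -/

/-- Unordered pairs {i,j} ⊆ {1,…,n}, encoded as ordered pairs (i,j), i < j (0-based). -/
abbrev PairIdx (n : ℕ) := {p : Fin n × Fin n // p.1 < p.2}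

/-- The subgroup `⟨λ_{i,j}, λ_{j,i}⟩` of `UVP n` associated to an unordered pair {i,j}. -/
def pairSubgroup (n : ℕ) (p : PairIdx n) : Subgroup (UVB n) :=
  Subgroup.closure {UVB.lam n (p.1.1.val + 1) (p.1.2.val + 1),
                    UVB.lam n (p.1.2.val + 1) (p.1.1.val + 1)}

/-!
The transpositions `(k k+1)` lift to the virtual generators `ρ_k`, which gives a section `s` of `ι`;
conjugation by `s π` takes `λ_{i,j}` to `λ_{π i, π j}`. Substituting `σ_k = λ_{k,k+1}⁻¹ ρ_k` in the
relations on three consecutive strands, the purely virtual and the mixed one express only this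
action, while the other three hold if and only if `λ_{i,j}`, `λ_{j,k}` and `λ_{i,k}` commute. By
equivariance, `λ_{i,j}` and `λ_{k,l}` commute as soon as `{i,j} ≠ {k,l}`, and the subgroup generated
by all the `λ_{i,j}` is normal with complement the image of `s`; hence it is `ker ι`.

The equivalence also works backwards: in the semidirect product of `S_n` with a power of the free
group of rank two, elements permuted and commuting as the `λ_{i,j}` should be satisfy the defining
relations, so `UVB n` maps to this group. Composed with this map, the product of the free groups on
`λ_{i,j}`, `λ_{j,i}` embeds.
-/

/-! ### Homomorphisms from the symmetric group -/

/-- The transpositions `(k k+1)` of `Fin n` with `a ≤ k`. -/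
def adjacentSwaps (n a : ℕ) : Set (Equiv.Perm (Fin n)) :=
  {τ | ∃ (k : ℕ) (hk : k + 1 < n), a ≤ k ∧ τ = Equiv.swap ⟨k, by lia⟩ ⟨k + 1, hk⟩}

namespace adjacentSwaps

variable {n : ℕ}

theorem mem_orbit_closure {a : ℕ} {x y : Fin n} (hx : a ≤ x) (hxy : x ≤ y) :
    y ∈ MulAction.orbit (Subgroup.closure (adjacentSwaps n a)) x := by
  suffices ∀ (d : ℕ) (hd : x + d < n),
      (⟨x + d, hd⟩ : Fin n) ∈ MulAction.orbit (Subgroup.closure (adjacentSwaps n a)) x by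
    simpa only [Nat.add_sub_cancel' (Fin.le_def.1 hxy)] using this (y - x) (by lia)
  intro d hd
  induction d with
  | zero => exact MulAction.mem_orbit_self x
  | succ d ih =>
    have hstep : Equiv.swap (⟨x + d, by lia⟩ : Fin n) ⟨x + d + 1, hd⟩ ∈ adjacentSwaps n a :=
      ⟨x + d, hd, by lia, rfl⟩
    have hmem := MulAction.mem_orbit_of_mem_orbit
      (⟨_, Subgroup.subset_closure hstep⟩ : Subgroup.closure (adjacentSwaps n a)) (ih (by lia))
    rwa [Subgroup.mk_smul, Equiv.Perm.smul_def, Equiv.swap_apply_left] at hmem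

theorem mem_closure {a : ℕ} {π : Equiv.Perm (Fin n)} (hπ : ∀ x : Fin n, (x : ℕ) < a → π x = x) :
    π ∈ Subgroup.closure (adjacentSwaps n a) := by
  have isSwap : ∀ τ ∈ adjacentSwaps n a, τ.IsSwap := by
    rintro _ ⟨k, hk, -, rfl⟩
    exact ⟨_, _, by simp [Fin.ext_iff], rfl⟩
  refine (mem_closure_isSwap isSwap).2 ⟨Set.toFinite _, fun x ↦ ?_⟩
  by_cases hx : (x : ℕ) < a
  · rw [hπ x hx]
    exact MulAction.mem_orbit_self x
  have hπx : ¬ (π x : ℕ) < a := fun hlt ↦ hx (by rwa [π.injective (hπ _ hlt)] at hlt)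
  obtain hle | hle := le_total x (π x)
  · exact mem_orbit_closure (not_lt.1 hx) hle
  · exact MulAction.mem_orbit_symm.1 (mem_orbit_closure (not_lt.1 hπx) hle)

theorem closure_eq_top : Subgroup.closure (adjacentSwaps n 0) = ⊤ :=
  top_unique fun _ _ ↦ mem_closure fun x hx ↦ absurd hx (Nat.not_lt_zero x)

theorem monoidHom_ext {G : Type*} [Group G] {f g : Equiv.Perm (Fin n) →* G}
    (h : ∀ (k : ℕ) (hk : k + 1 < n),
      f (Equiv.swap ⟨k, by lia⟩ ⟨k + 1, hk⟩) = g (Equiv.swap ⟨k, by lia⟩ ⟨k + 1, hk⟩)) :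
    f = g := by
  refine MonoidHom.eq_of_eqOn_dense closure_eq_top ?_
  rintro _ ⟨k, hk, -, rfl⟩
  exact h k hk

end adjacentSwaps

/-- `r 0, …, r (m - 1)` satisfy the Coxeter relations of type `A_m`, those of the adjacent
transpositions of `m + 1` letters. -/
structure IsCoxeterFamilyA {G : Type*} [Group G] (m : ℕ) (r : ℕ → G) : Prop where
  mul_self : ∀ k < m, r k * r k = 1
  commute : ∀ k l, k + 2 ≤ l → l < m → Commute (r k) (r l)
  braid : ∀ k, k + 1 < m → r k * r (k + 1) * r k = r (k + 1) * r k * r (k + 1)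

namespace IsCoxeterFamilyA

/-- The product `r j * r (j + 1) * ⋯ * r (m - 1)`. For a Coxeter family these are the minimal
representatives of the cosets of the subgroup generated by all members but the last. -/
def prodIco {G : Type*} [Group G] (r : ℕ → G) (j m : ℕ) : G := ((List.Ico j m).map r).prod

variable {G : Type*} [Group G] {m : ℕ} {r : ℕ → G}

theorem prodIco_self (r : ℕ → G) (m : ℕ) : prodIco r m m = 1 := by
  simp [prodIco]

theorem prodIco_eq_mul (r : ℕ → G) {j m : ℕ} (hj : j < m) :
    prodIco r j m = r j * prodIco r (j + 1) m := by
  simp [prodIco, List.Ico.eq_cons hj]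

theorem pred (h : IsCoxeterFamilyA (m + 1) r) : IsCoxeterFamilyA m r where
  mul_self k hk := h.mul_self k (by lia)
  commute k l hkl hl := h.commute k l hkl (by lia)
  braid k hk := h.braid k (by lia)

theorem commute_prodIco (h : IsCoxeterFamilyA m r) {k j : ℕ} (hkj : k + 2 ≤ j) :
    Commute (r k) (prodIco r j m) := by
  refine Commute.list_prod_right _ _ fun x hx ↦ ?_
  obtain ⟨l, hl, rfl⟩ := List.mem_map.1 hx
  rw [List.Ico.mem] at hl
  exact h.commute k l (by lia) hl.2

theorem mul_prodIco (h : IsCoxeterFamilyA m r) {j k : ℕ} (hjk : j ≤ k) (hk : k + 1 < m) :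
    r (k + 1) * prodIco r j m = prodIco r j m * r k := by
  obtain rfl | hlt := hjk.eq_or_lt
  · have hcomm := (h.commute_prodIco (le_refl (j + 2))).eq
    rw [prodIco_eq_mul r (by lia : j < m), prodIco_eq_mul r hk]
    calc r (j + 1) * (r j * (r (j + 1) * prodIco r (j + 2) m))
        = r (j + 1) * r j * r (j + 1) * prodIco r (j + 2) m := by simp only [mul_assoc]
      _ = r j * r (j + 1) * (r j * prodIco r (j + 2) m) := by rw [← h.braid j hk, mul_assoc]
      _ = r j * (r (j + 1) * prodIco r (j + 2) m) * r j := by simp only [hcomm, mul_assoc]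
  · rw [prodIco_eq_mul r (by lia : j < m), ← mul_assoc, ← (h.commute j (k + 1) (by lia) hk).eq,
      mul_assoc, h.mul_prodIco hlt hk, mul_assoc]
  termination_by k - j

theorem exists_mul_prodIco_eq (h : IsCoxeterFamilyA (m + 1) r) {j k : ℕ} (hj : j ≤ m + 1)
    (hk : k ≤ m) :
    ∃ u ∈ Subgroup.closure (r '' Set.Iio m),
      r k * prodIco r j (m + 1) = prodIco r (Equiv.swap k (k + 1) j) (m + 1) * u := by
  obtain hlt | rfl | rfl | hlt : j < k ∨ j = k ∨ j = k + 1 ∨ k + 1 < j := by lia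
  · obtain ⟨k, rfl⟩ := Nat.exists_eq_add_of_lt (Nat.zero_lt_of_lt hlt)
    rw [zero_add, Equiv.swap_apply_of_ne_of_ne (by lia) (by lia)]
    exact ⟨r k, Subgroup.subset_closure ⟨k, by grind, rfl⟩, h.mul_prodIco (by lia) (by lia)⟩
  · refine ⟨1, one_mem _, ?_⟩
    rw [Equiv.swap_apply_left, prodIco_eq_mul r (by lia : j < m + 1), ← mul_assoc,
      h.mul_self j (by lia), one_mul, mul_one]
  · refine ⟨1, one_mem _, ?_⟩
    rw [Equiv.swap_apply_right, mul_one, ← prodIco_eq_mul r (by lia)]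
  · rw [Equiv.swap_apply_of_ne_of_ne (by lia) (by lia)]
    exact ⟨r k, Subgroup.subset_closure ⟨k, by grind, rfl⟩, (h.commute_prodIco hlt).eq⟩

theorem prodIco_inv_mul_mem (h : IsCoxeterFamilyA (m + 1) r) {f : G →* Equiv.Perm ℕ}
    (hf : ∀ k ≤ m, f (r k) = Equiv.swap k (k + 1)) {w : G}
    (hw : w ∈ Subgroup.closure (r '' Set.Iio (m + 1))) :
    f w (m + 1) ≤ m + 1 ∧
      (prodIco r (f w (m + 1)) (m + 1))⁻¹ * w ∈ Subgroup.closure (r '' Set.Iio m) := by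
  -- The coset of `w` modulo the first `m` generators is read off the image of the last letter.
  have step {k : ℕ} {w : G} (hk : k ≤ m) (hle : f w (m + 1) ≤ m + 1)
      (hmem : (prodIco r (f w (m + 1)) (m + 1))⁻¹ * w ∈ Subgroup.closure (r '' Set.Iio m)) :
      f (r k * w) (m + 1) ≤ m + 1 ∧ (prodIco r (f (r k * w) (m + 1)) (m + 1))⁻¹ * (r k * w) ∈
        Subgroup.closure (r '' Set.Iio m) := by
    obtain ⟨u, hu, heq⟩ := h.exists_mul_prodIco_eq hle hk
    rw [map_mul, hf k hk, Equiv.Perm.mul_apply]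
    refine ⟨by grind, ?_⟩
    convert mul_mem hu hmem using 1
    rw [inv_mul_eq_iff_eq_mul, ← mul_assoc, ← heq, mul_assoc, mul_inv_cancel_left]
  induction hw using Subgroup.closure_induction_left with
  | one => simp [prodIco_self]
  | mul_left x hx w _ ih =>
    obtain ⟨k, hk, rfl⟩ := hx
    exact step (Nat.lt_succ_iff.1 hk) ih.1 ih.2
  | inv_mul_cancel x hx w _ ih =>
    obtain ⟨k, hk, rfl⟩ := hx
    rw [inv_eq_of_mul_eq_one_right (h.mul_self k hk)]
    exact step (Nat.lt_succ_iff.1 hk) ih.1 ih.2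

theorem eq_one_of_map_eq_one (h : IsCoxeterFamilyA m r) {f : G →* Equiv.Perm ℕ}
    (hf : ∀ k < m, f (r k) = Equiv.swap k (k + 1)) {w : G}
    (hw : w ∈ Subgroup.closure (r '' Set.Iio m)) (hfw : f w = 1) : w = 1 := by
  induction m with
  | zero => simpa using hw
  | succ m ih =>
    have hmem := (h.prodIco_inv_mul_mem (fun k hk ↦ hf k (by lia)) hw).2
    rw [hfw, Equiv.Perm.one_apply, prodIco_self, inv_one, one_mul] at hmem
    exact ih h.pred (fun k hk ↦ hf k (by lia)) hmem

end IsCoxeterFamilyA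

theorem viaEmbeddingHom_swap {α β : Type*} [DecidableEq α] [DecidableEq β] (e : α ↪ β) (x y : α) :
    Equiv.Perm.viaEmbeddingHom e (Equiv.swap x y) = Equiv.swap (e x) (e y) := by
  ext z
  rw [Equiv.Perm.viaEmbeddingHom_apply]
  by_cases hz : z ∈ Set.range e
  · obtain ⟨z, rfl⟩ := hz
    rw [Equiv.Perm.viaEmbedding_apply, e.injective.map_swap]
  · rw [Equiv.Perm.viaEmbedding_apply_of_notMem _ _ _ hz, Equiv.swap_apply_of_ne_of_ne] <;>
      rintro rfl <;> exact hz ⟨_, rfl⟩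

theorem swap_braid_s1 {α : Type*} [DecidableEq α] {i j k : α} (hij : i ≠ j) (hjk : j ≠ k)
    (hik : i ≠ k) :
    Equiv.swap i j * Equiv.swap j k * Equiv.swap i j =
      Equiv.swap j k * Equiv.swap i j * Equiv.swap j k := by
  rw [Equiv.swap_mul_swap_mul_swap hij hik, Equiv.swap_comm i j, Equiv.swap_comm j k,
    Equiv.swap_mul_swap_mul_swap hjk.symm hik.symm, Equiv.swap_comm]

theorem commute_swap_swap {α : Type*} [DecidableEq α] {i j k l : α} (hik : i ≠ k) (hil : i ≠ l)
    (hjk : j ≠ k) (hjl : j ≠ l) : Commute (Equiv.swap i j) (Equiv.swap k l) := by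
  rw [Commute, SemiconjBy, Equiv.mul_swap_eq_swap_mul,
    Equiv.swap_apply_of_ne_of_ne hik.symm hjk.symm, Equiv.swap_apply_of_ne_of_ne hil.symm hjl.symm]

theorem isCoxeterFamilyA_swap_nat (m : ℕ) :
    IsCoxeterFamilyA m fun k : ℕ ↦ Equiv.swap k (k + 1) where
  mul_self k _ := Equiv.swap_mul_self _ _
  commute k l hkl _ := commute_swap_swap (by lia) (by lia) (by lia) (by lia)
  braid k _ := swap_braid_s1 (by lia) (by lia) (by lia)

namespace IsCoxeterFamilyA

variable {G G' : Type*} [Group G] [Group G'] {m n : ℕ} {r : ℕ → G} {r' : ℕ → G'}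

theorem prodMk (h : IsCoxeterFamilyA m r) (h' : IsCoxeterFamilyA m r') :
    IsCoxeterFamilyA m fun k ↦ (r k, r' k) where
  mul_self k hk := Prod.ext (h.mul_self k hk) (h'.mul_self k hk)
  commute k l hkl hl := (h.commute k l hkl hl).prod (h'.commute k l hkl hl)
  braid k hk := Prod.ext (h.braid k hk) (h'.braid k hk)

theorem exists_perm_monoidHom (h : IsCoxeterFamilyA (n - 1) r) :
    ∃ s : Equiv.Perm (Fin n) →* G,
      ∀ (k : ℕ) (hk : k + 1 < n), s (Equiv.swap ⟨k, by lia⟩ ⟨k + 1, hk⟩) = r k := by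
  -- The pairs `(r k, (k k+1))` generate the graph of `s`, which projects injectively to `Perm ℕ`.
  have hpair := h.prodMk (isCoxeterFamilyA_swap_nat (n - 1))
  set H := Subgroup.closure ((fun k ↦ (r k, Equiv.swap k (k + 1))) '' Set.Iio (n - 1))
  let toPerm : H →* Equiv.Perm ℕ := (MonoidHom.snd G _).comp H.subtype
  have toPerm_injective : Function.Injective toPerm :=
    (injective_iff_map_eq_one toPerm).2 fun w hw ↦
      Subtype.ext (hpair.eq_one_of_map_eq_one (f := MonoidHom.snd G _) (fun _ _ ↦ rfl) w.2 hw)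
  let extend := Equiv.Perm.viaEmbeddingHom (Fin.valEmbedding (n := n))
  let lift (k : ℕ) (hk : k + 1 < n) : H :=
    ⟨(r k, Equiv.swap k (k + 1)), Subgroup.subset_closure ⟨k, Nat.lt_sub_of_add_lt hk, rfl⟩⟩
  have toPerm_lift (k : ℕ) (hk : k + 1 < n) :
      toPerm (lift k hk) = extend (Equiv.swap ⟨k, by lia⟩ ⟨k + 1, hk⟩) :=
    (viaEmbeddingHom_swap Fin.valEmbedding ⟨k, by lia⟩ ⟨k + 1, hk⟩).symm
  have extend_mem (π : Equiv.Perm (Fin n)) : extend π ∈ toPerm.range := by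
    suffices ⊤ ≤ toPerm.range.comap extend from this (Subgroup.mem_top π)
    rw [← adjacentSwaps.closure_eq_top, Subgroup.closure_le]
    rintro _ ⟨k, hk, -, rfl⟩
    exact ⟨lift k hk, toPerm_lift k hk⟩
  refine ⟨((MonoidHom.fst G _).comp H.subtype).comp
    ((MonoidHom.ofInjective toPerm_injective).symm.toMonoidHom.comp
      (extend.codRestrict toPerm.range extend_mem)), fun k hk ↦ ?_⟩
  suffices (MonoidHom.ofInjective toPerm_injective).symm (extend.codRestrict toPerm.range extend_mem
      (Equiv.swap ⟨k, by lia⟩ ⟨k + 1, hk⟩)) = lift k hk from congrArg (fun w : H ↦ w.1.1) this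
  rw [MulEquiv.symm_apply_eq]
  exact Subtype.ext (toPerm_lift k hk).symm

end IsCoxeterFamilyA

/-! ### Relations on three strands -/

theorem semiconjBy_symm_of_mul_self {G : Type*} [Group G] {s x y : G} (hs : s * s = 1)
    (h : SemiconjBy s x y) : SemiconjBy s y x :=
  inv_eq_of_mul_eq_one_left hs ▸ h.inv_symm_left

theorem semiconjBy_of_eq_mul_mul {G : Type*} [Group G] {s x y : G} (hs : s * s = 1)
    (h : y = s * x * s) : SemiconjBy s x y := by
  rw [SemiconjBy, h, mul_assoc _ s s, hs, mul_one]

/-- `s` and `t` satisfy the Coxeter relations of `S₃`, acting by conjugation on elements `x`, `y`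
and `z` as on the ordered pairs `(1, 2)`, `(2, 3)` and `(1, 3)`. -/
structure IsStrandTriple {G : Type*} [Group G] (s t x y z : G) : Prop where
  left_mul_self : s * s = 1
  right_mul_self : t * t = 1
  braid : s * t * s = t * s * t
  left : SemiconjBy s y z
  right : SemiconjBy t x z

namespace IsStrandTriple

variable {G : Type*} [Group G] {s t x y z : G}

theorem inv (h : IsStrandTriple s t x y z) : IsStrandTriple s t x⁻¹ y⁻¹ z⁻¹ :=
  { h with left := h.left.inv_right, right := h.right.inv_right }

theorem left_symm (h : IsStrandTriple s t x y z) : SemiconjBy s z y :=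
  semiconjBy_symm_of_mul_self h.left_mul_self h.left

theorem right_symm (h : IsStrandTriple s t x y z) : SemiconjBy t z x :=
  semiconjBy_symm_of_mul_self h.right_mul_self h.right

theorem mixed (h : IsStrandTriple s t x y z) : s * t * (x * s) = y * t * (s * t) := by
  calc s * t * (x * s) = s * (t * x) * s := by simp only [mul_assoc]
    _ = s * z * t * s := by rw [h.right.eq]; simp only [mul_assoc]
    _ = y * (s * t * s) := by rw [h.left_symm.eq]; simp only [mul_assoc]
    _ = y * t * (s * t) := by rw [h.braid]; simp only [mul_assoc]

theorem virtual_left_iff (h : IsStrandTriple s t x y z) :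
    s * (y * t) * (x * s) = y * t * (x * s) * t ↔ Commute z y := by
  have hl : s * (y * t) * (x * s) = z * y * (t * s * t) := by
    calc s * (y * t) * (x * s) = s * y * (t * x) * s := by simp only [mul_assoc]
      _ = z * (s * z) * t * s := by rw [h.left.eq, h.right.eq]; simp only [mul_assoc]
      _ = z * y * (t * s * t) := by rw [h.left_symm.eq, ← h.braid]; simp only [mul_assoc]
  have hr : y * t * (x * s) * t = y * z * (t * s * t) := by
    calc y * t * (x * s) * t = y * (t * x) * s * t := by simp only [mul_assoc]
      _ = y * z * (t * s * t) := by rw [h.right.eq]; simp only [mul_assoc]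
  rw [hl, hr, mul_left_inj, Commute, SemiconjBy]

theorem virtual_right_iff (h : IsStrandTriple s t x y z) :
    t * (x * s) * (y * t) = x * s * (y * t) * s ↔ Commute z x := by
  have hl : t * (x * s) * (y * t) = z * x * (s * t * s) := by
    calc t * (x * s) * (y * t) = t * x * (s * y) * t := by simp only [mul_assoc]
      _ = z * (t * z) * s * t := by rw [h.left.eq, h.right.eq]; simp only [mul_assoc]
      _ = z * x * (s * t * s) := by rw [h.right_symm.eq, h.braid]; simp only [mul_assoc]
  have hr : x * s * (y * t) * s = x * z * (s * t * s) := by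
    calc x * s * (y * t) * s = x * (s * y) * t * s := by simp only [mul_assoc]
      _ = x * z * (s * t * s) := by rw [h.left.eq]; simp only [mul_assoc]
  rw [hl, hr, mul_left_inj, Commute, SemiconjBy]

theorem classical_iff (h : IsStrandTriple s t x y z) :
    x * s * (y * t) * (x * s) = y * t * (x * s) * (y * t) ↔ x * z * y = y * z * x := by
  have hl : x * s * (y * t) * (x * s) = x * z * y * (t * s * t) := by
    calc x * s * (y * t) * (x * s) = x * (s * y) * (t * x) * s := by simp only [mul_assoc]
      _ = x * z * (s * z) * t * s := by rw [h.left.eq, h.right.eq]; simp only [mul_assoc]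
      _ = x * z * y * (t * s * t) := by rw [h.left_symm.eq, ← h.braid]; simp only [mul_assoc]
  have hr : y * t * (x * s) * (y * t) = y * z * x * (t * s * t) := by
    calc y * t * (x * s) * (y * t) = y * (t * x) * (s * y) * t := by simp only [mul_assoc]
      _ = y * z * (t * z) * s * t := by rw [h.left.eq, h.right.eq]; simp only [mul_assoc]
      _ = y * z * x * (t * s * t) := by rw [h.right_symm.eq]; simp only [mul_assoc]
  rw [hl, hr, mul_left_inj]

theorem relations_iff_commute (h : IsStrandTriple s t x y z) :
    (x * s * (y * t) * (x * s) = y * t * (x * s) * (y * t) ∧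
      s * (y * t) * (x * s) = y * t * (x * s) * t ∧
      t * (x * s) * (y * t) = x * s * (y * t) * s) ↔
    Commute x y ∧ Commute z y ∧ Commute z x := by
  rw [h.virtual_left_iff, h.virtual_right_iff, h.classical_iff, and_congr_left_iff]
  rintro ⟨hzy, hzx⟩
  rw [← hzx.eq, mul_assoc, ← hzy.eq, mul_assoc, mul_right_inj, Commute, SemiconjBy]

end IsStrandTriple

/-! ### Products of free groups of rank two -/

section NoncommPiCoprod

variable {G ι : Type*} [Group G] [Fintype ι] {N : ι → Type*} [∀ i, Group (N i)]
  {φ : ∀ i, N i →* G} (hφ : Pairwise fun i j ↦ ∀ x y, Commute (φ i x) (φ j y))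

theorem noncommPiCoprod_injective_of_retraction {ψ : ∀ i, G →* N i}
    (hself : ∀ i, (ψ i).comp (φ i) = MonoidHom.id (N i))
    (hne : ∀ i j, i ≠ j → (ψ i).comp (φ j) = 1) :
    Function.Injective (MonoidHom.noncommPiCoprod φ hφ) := by
  classical
  suffices (MonoidHom.pi ψ).comp (MonoidHom.noncommPiCoprod φ hφ) = MonoidHom.id _ from
    Function.LeftInverse.injective (g := MonoidHom.pi ψ) (DFunLike.congr_fun this)
  refine MonoidHom.pi_ext fun j x ↦ funext fun i ↦ ?_
  rw [MonoidHom.comp_apply, MonoidHom.noncommPiCoprod_mulSingle, MonoidHom.id_apply]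
  obtain rfl | hij := eq_or_ne i j
  · rw [Pi.mulSingle_eq_same]
    exact DFunLike.congr_fun (hself i) x
  · rw [Pi.mulSingle_eq_of_ne hij]
    exact DFunLike.congr_fun (hne i j hij) x

variable {hφ}

theorem injective_of_noncommPiCoprod_injective
    (h : Function.Injective (MonoidHom.noncommPiCoprod φ hφ)) (i : ι) :
    Function.Injective (φ i) := by
  classical
  intro x y hxy
  refine Pi.mulSingle_injective i (h ?_)
  rwa [MonoidHom.noncommPiCoprod_mulSingle, MonoidHom.noncommPiCoprod_mulSingle]

theorem subgroup_noncommPiCoprod_injective {H : ι → Subgroup G} (hH : ∀ i, (φ i).range = H i)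
    (h : Function.Injective (MonoidHom.noncommPiCoprod φ hφ))
    (hcomm : Pairwise fun i j ↦ ∀ x y, x ∈ H i → y ∈ H j → Commute x y) :
    Function.Injective (Subgroup.noncommPiCoprod hcomm) := by
  obtain rfl : (fun i ↦ (φ i).range) = H := funext hH
  refine (injective_iff_map_eq_one _).2 fun x hx ↦ ?_
  choose y hy using fun i ↦ (x i).2
  have hyx : (fun i ↦ (φ i).rangeRestrict (y i)) = x := funext fun i ↦ Subtype.ext (hy i)
  have hy1 : y = 1 := by
    refine (injective_iff_map_eq_one _).1 h y (Eq.trans ?_ hx)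
    rw [MonoidHom.noncommPiCoprod_apply, Subgroup.noncommPiCoprod_apply]
    simp only [hy]
  rw [← hyx, hy1]
  exact funext fun i ↦ map_one _

end NoncommPiCoprod

section PairLift

variable {G G' : Type*} [Group G] [Group G']

/-- The homomorphism from the free group of rank two sending its basis to `x` and `y`. -/
def pairLift (x y : G) : FreeGroup Bool →* G := FreeGroup.lift fun b ↦ if b then x else y

theorem range_pairLift (x y : G) : (pairLift x y).range = Subgroup.closure {x, y} := by
  rw [pairLift, FreeGroup.range_lift_eq_closure]
  congr 1
  ext z
  simp [eq_comm, or_comm]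

theorem map_comp_pairLift (φ : G →* G') (x y : G) :
    φ.comp (pairLift x y) = pairLift (φ x) (φ y) := by
  ext b
  cases b <;> simp [pairLift]

theorem pairLift_of : pairLift (FreeGroup.of true) (FreeGroup.of false) = MonoidHom.id _ := by
  ext b
  cases b <;> simp [pairLift]

theorem pairLift_one : pairLift (1 : G) 1 = 1 := by
  ext b
  simp [pairLift]

theorem commute_pairLift {x y x' y' : G} (hxx : Commute x x') (hxy : Commute x y')
    (hyx : Commute y x') (hyy : Commute y y') (u v : FreeGroup Bool) :
    Commute (pairLift x y u) (pairLift x' y' v) := by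
  suffices (pairLift x y).range ≤ Subgroup.centralizer (pairLift x' y').range from
    (this ⟨u, rfl⟩ _ ⟨v, rfl⟩).symm
  rw [range_pairLift, range_pairLift, Subgroup.centralizer_closure, Subgroup.closure_le]
  rintro _ (rfl | rfl) <;> rw [SetLike.mem_coe, Subgroup.mem_centralizer_iff] <;>
    rintro _ (rfl | rfl)
  exacts [hxx.eq.symm, hxy.eq.symm, hyx.eq.symm, hyy.eq.symm]

end PairLift

section Model

variable {α : Type*} [DecidableEq α]

/-- The counterpart of `λ_{i,j}` in a product of copies of the free group on `true`, `false`
indexed by the ordered pairs: it is `true` in the copy of `(i, j)` and `false` in that of `(j, i)`,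
so that permuting the letters permutes these elements. -/
def pairGen (i j : α) : α × α → FreeGroup Bool := fun q ↦
  if q = (i, j) then FreeGroup.of true else if q = (j, i) then FreeGroup.of false else 1

theorem pairGen_apply_self (i j : α) : pairGen i j (i, j) = FreeGroup.of true := if_pos rfl

theorem pairGen_apply_swap {i j : α} (hij : i ≠ j) : pairGen i j (j, i) = FreeGroup.of false := by
  simp [pairGen, hij]

theorem pairGen_apply_of_ne {i j k l : α} (h : s(k, l) ≠ s(i, j)) : pairGen i j (k, l) = 1 := by
  rw [Ne, Sym2.eq_iff, not_or] at h
  simp [pairGen, h]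

theorem mulAutArrow_pairGen (π : Equiv.Perm α) (i j : α) :
    mulAutArrow π (pairGen i j) = pairGen (π i) (π j) := by
  ext ⟨k, l⟩ : 1
  change pairGen i j (π⁻¹ k, π⁻¹ l) = _
  simp only [pairGen, Prod.mk.injEq, Equiv.Perm.inv_eq_iff_eq]

theorem commute_pairGen {i j k l : α} (h : s(i, j) ≠ s(k, l)) :
    Commute (pairGen i j) (pairGen k l) := by
  refine Pi.commute_iff.2 fun ⟨a, b⟩ ↦ ?_
  by_cases hab : s(a, b) = s(i, j)
  · rw [pairGen_apply_of_ne (i := k) (hab ▸ h)]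
    exact Commute.one_right _
  · rw [pairGen_apply_of_ne (i := i) hab]
    exact Commute.one_left _

/-- The group in which `UVB n` is modelled for `α = Fin n`: permutations of the letters acting on
a product of free groups of rank two. -/
abbrev PairModel (α : Type*) [DecidableEq α] :=
  (α × α → FreeGroup Bool) ⋊[mulAutArrow] Equiv.Perm α

namespace PairModel

/-- The counterpart of `λ_{i,j}`. -/
def lam (i j : α) : PairModel α := SemidirectProduct.inl (pairGen i j)

/-- The counterpart of the virtual crossing of the strands `i` and `j`. -/
def rho (i j : α) : PairModel α := SemidirectProduct.inr (Equiv.swap i j)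

/-- The counterpart of the classical crossing of the strands `i` and `j`. -/
def sigma (i j : α) : PairModel α := (lam i j)⁻¹ * rho i j

theorem semiconjBy_inr_lam (π : Equiv.Perm α) (i j : α) :
    SemiconjBy (SemidirectProduct.inr π : PairModel α) (lam i j) (lam (π i) (π j)) := by
  rw [SemiconjBy, lam, lam, ← mulAutArrow_pairGen, SemidirectProduct.inl_aut, map_inv,
    inv_mul_cancel_right]

theorem commute_lam {i j k l : α} (h : s(i, j) ≠ s(k, l)) :
    Commute (lam i j : PairModel α) (lam k l) :=
  (commute_pairGen h).map SemidirectProduct.inl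

theorem rho_mul_self (i j : α) : (rho i j : PairModel α) * rho i j = 1 := by
  rw [rho, ← map_mul, Equiv.swap_mul_self, map_one]

theorem isStrandTriple {i j k : α} (hij : i ≠ j) (hjk : j ≠ k) (hik : i ≠ k) :
    IsStrandTriple (rho i j) (rho j k) (lam i j : PairModel α) (lam j k) (lam i k) where
  left_mul_self := rho_mul_self i j
  right_mul_self := rho_mul_self j k
  braid := by simp only [rho, ← map_mul, swap_braid_s1 hij hjk hik]
  left := by
    have h := semiconjBy_inr_lam (Equiv.swap i j) j k
    rwa [Equiv.swap_apply_right, Equiv.swap_apply_of_ne_of_ne hik.symm hjk.symm] at h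
  right := by
    have h := semiconjBy_inr_lam (Equiv.swap j k) i j
    rwa [Equiv.swap_apply_left, Equiv.swap_apply_of_ne_of_ne hij hik] at h

theorem sigma_rho_relations {i j k : α} (hij : i ≠ j) (hjk : j ≠ k) (hik : i ≠ k) :
    (sigma i j * sigma j k * sigma i j = sigma j k * sigma i j * sigma j k ∧
      rho i j * sigma j k * sigma i j = sigma j k * sigma i j * rho j k ∧
      rho j k * sigma i j * sigma j k = sigma i j * sigma j k * (rho i j : PairModel α)) := by
  refine (isStrandTriple hij hjk hik).inv.relations_iff_commute.2
    ⟨(commute_lam ?_).inv_inv, (commute_lam ?_).inv_inv, (commute_lam ?_).inv_inv⟩ <;> grind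

theorem commute_of_disjoint {i j k l : α} (hik : i ≠ k) (hil : i ≠ l) (hjk : j ≠ k) (hjl : j ≠ l) :
    Commute (sigma i j : PairModel α) (sigma k l) ∧
      Commute (rho i j : PairModel α) (rho k l) ∧
      Commute (sigma i j : PairModel α) (rho k l) := by
  have hrr : Commute (rho i j : PairModel α) (rho k l) :=
    (commute_swap_swap hik hil hjk hjl).map SemidirectProduct.inr
  have hrl : Commute (rho i j : PairModel α) (lam k l) := by
    have h := semiconjBy_inr_lam (Equiv.swap i j) k l
    rwa [Equiv.swap_apply_of_ne_of_ne hik.symm hjk.symm,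
      Equiv.swap_apply_of_ne_of_ne hil.symm hjl.symm] at h
  have hlr : Commute (lam i j : PairModel α) (rho k l) := by
    have h := semiconjBy_inr_lam (Equiv.swap k l) i j
    rw [Equiv.swap_apply_of_ne_of_ne hik hil, Equiv.swap_apply_of_ne_of_ne hjk hjl] at h
    exact Commute.symm h
  have hll : Commute (lam i j : PairModel α) (lam k l) := commute_lam (by grind)
  exact ⟨(hll.inv_inv.mul_right hlr.inv_left).mul_left (hrl.inv_right.mul_right hrr), hrr,
    hlr.inv_left.mul_left hrr⟩

end PairModel

end Model

/-! ### The unrestricted virtual braid group -/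

namespace UVB

variable {n : ℕ}

section Relations

open UVBGen

theorem mk_eq_mk_of_mem_uvbRels {a b : FreeGroup (UVBGen n)} (h : a * b⁻¹ ∈ uvbRels n) :
    PresentedGroup.mk (uvbRels n) a = PresentedGroup.mk (uvbRels n) b := by
  rw [← mul_inv_eq_one, ← map_inv, ← map_mul]
  exact PresentedGroup.one_of_mem h

theorem sigma_succ_eq_mk {k : ℕ} (hk : k + 1 < n) :
    sigma n (k + 1) = PresentedGroup.mk (uvbRels n) (sg ⟨k, by lia⟩) :=
  dif_pos ⟨by lia, by lia⟩

theorem rho_succ_eq_mk {k : ℕ} (hk : k + 1 < n) :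
    rho n (k + 1) = PresentedGroup.mk (uvbRels n) (rg ⟨k, by lia⟩) :=
  dif_pos ⟨by lia, by lia⟩

theorem rho_mul_self {k : ℕ} (hk : k + 1 < n) : rho n (k + 1) * rho n (k + 1) = 1 := by
  rw [rho_succ_eq_mk hk]
  exact PresentedGroup.one_of_mem (Or.inr (Or.inr ⟨_, rfl⟩))

theorem commute_rho_rho {k l : ℕ} (hkl : k + 2 ≤ l) (hl : l + 1 < n) :
    Commute (rho n (k + 1)) (rho n (l + 1)) := by
  rw [rho_succ_eq_mk (by lia : k + 1 < n), rho_succ_eq_mk hl]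
  exact mk_eq_mk_of_mem_uvbRels
    (Or.inr (Or.inl ⟨⟨k, by lia⟩, ⟨l, by lia⟩, by grind, by tauto⟩))

theorem commute_sigma_sigma {k l : ℕ} (hkl : k + 2 ≤ l) (hl : l + 1 < n) :
    Commute (sigma n (k + 1)) (sigma n (l + 1)) := by
  rw [sigma_succ_eq_mk (by lia : k + 1 < n), sigma_succ_eq_mk hl]
  exact mk_eq_mk_of_mem_uvbRels
    (Or.inr (Or.inl ⟨⟨k, by lia⟩, ⟨l, by lia⟩, by grind, by tauto⟩))

theorem commute_sigma_rho {k l : ℕ} (hkl : k + 2 ≤ l ∨ l + 2 ≤ k) (hk : k + 1 < n)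
    (hl : l + 1 < n) :
    Commute (sigma n (k + 1)) (rho n (l + 1)) := by
  rw [sigma_succ_eq_mk hk, rho_succ_eq_mk hl]
  exact mk_eq_mk_of_mem_uvbRels
    (Or.inr (Or.inl ⟨⟨k, by lia⟩, ⟨l, by lia⟩, by grind, by tauto⟩))

theorem sigma_mul_sigma_mul_sigma {k : ℕ} (hk : k + 2 < n) :
    sigma n (k + 1) * sigma n (k + 2) * sigma n (k + 1) =
      sigma n (k + 2) * sigma n (k + 1) * sigma n (k + 2) := by
  rw [sigma_succ_eq_mk (by lia : k + 1 < n), sigma_succ_eq_mk hk]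
  exact mk_eq_mk_of_mem_uvbRels (Or.inl ⟨⟨k, by lia⟩, ⟨k + 1, by lia⟩, rfl, by tauto⟩)

theorem rho_mul_rho_mul_rho {k : ℕ} (hk : k + 2 < n) :
    rho n (k + 1) * rho n (k + 2) * rho n (k + 1) =
      rho n (k + 2) * rho n (k + 1) * rho n (k + 2) := by
  rw [rho_succ_eq_mk (by lia : k + 1 < n), rho_succ_eq_mk hk]
  exact mk_eq_mk_of_mem_uvbRels (Or.inl ⟨⟨k, by lia⟩, ⟨k + 1, by lia⟩, rfl, by tauto⟩)

theorem rho_mul_rho_mul_sigma {k : ℕ} (hk : k + 2 < n) :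
    rho n (k + 1) * rho n (k + 2) * sigma n (k + 1) =
      sigma n (k + 2) * rho n (k + 1) * rho n (k + 2) := by
  rw [rho_succ_eq_mk (by lia : k + 1 < n), sigma_succ_eq_mk (by lia : k + 1 < n),
    rho_succ_eq_mk hk, sigma_succ_eq_mk hk]
  exact mk_eq_mk_of_mem_uvbRels (Or.inl ⟨⟨k, by lia⟩, ⟨k + 1, by lia⟩, rfl, by tauto⟩)

theorem rho_mul_sigma_mul_sigma {k : ℕ} (hk : k + 2 < n) :
    rho n (k + 1) * sigma n (k + 2) * sigma n (k + 1) =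
      sigma n (k + 2) * sigma n (k + 1) * rho n (k + 2) := by
  rw [rho_succ_eq_mk (by lia : k + 1 < n), sigma_succ_eq_mk (by lia : k + 1 < n),
    rho_succ_eq_mk hk, sigma_succ_eq_mk hk]
  exact mk_eq_mk_of_mem_uvbRels (Or.inl ⟨⟨k, by lia⟩, ⟨k + 1, by lia⟩, rfl, by tauto⟩)

theorem rho_succ_mul_sigma_mul_sigma {k : ℕ} (hk : k + 2 < n) :
    rho n (k + 2) * sigma n (k + 1) * sigma n (k + 2) =
      sigma n (k + 1) * sigma n (k + 2) * rho n (k + 1) := by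
  rw [rho_succ_eq_mk (by lia : k + 1 < n), sigma_succ_eq_mk (by lia : k + 1 < n),
    rho_succ_eq_mk hk, sigma_succ_eq_mk hk]
  exact mk_eq_mk_of_mem_uvbRels (Or.inl ⟨⟨k, by lia⟩, ⟨k + 1, by lia⟩, rfl, by tauto⟩)

theorem isCoxeterFamilyA_rho : IsCoxeterFamilyA (n - 1) fun k ↦ rho n (k + 1) where
  mul_self k hk := rho_mul_self (by lia)
  commute k l hkl hl := commute_rho_rho hkl (by lia)
  braid k hk := rho_mul_rho_mul_rho (by lia)

theorem exists_isPermSection (n : ℕ) : ∃ s, IsPermSection n s := by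
  obtain ⟨s, hs⟩ := (isCoxeterFamilyA_rho (n := n)).exists_perm_monoidHom
  refine ⟨s, fun k h₁ h₂ ↦ ?_⟩
  obtain ⟨k, rfl⟩ := Nat.exists_eq_add_of_le' h₁
  exact hs k (by lia)

end Relations

section Lambda

theorem lam_succ_self (n k : ℕ) : lam n k (k + 1) = rho n k * (sigma n k)⁻¹ := by
  simp [lam]

theorem sigma_eq_lam_inv_mul_rho (n k : ℕ) :
    sigma n k = (lam n k (k + 1))⁻¹ * rho n k := by
  rw [lam_succ_self, mul_inv_rev, inv_inv, inv_mul_cancel_right]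

theorem semiconjBy_rho_lam_right {i j : ℕ} (hij : i < j) (hj : j + 1 < n) :
    SemiconjBy (rho n (j + 1)) (lam n (i + 1) (j + 1)) (lam n (i + 1) (j + 2)) := by
  refine semiconjBy_of_eq_mul_mul (rho_mul_self hj) ?_
  rw [lam, lam, if_pos (by lia), if_pos (by lia), (by lia : j + 2 - 1 - (i + 1) = j - 1 - i + 1),
    (by lia : j + 1 - 1 - (i + 1) = j - 1 - i), List.range'_concat,
    (by lia : i + 1 + 1 + 1 * (j - 1 - i) = j + 1)]
  simp [mul_assoc]

theorem semiconjBy_rho_lam_left {i j : ℕ} (hij : i < j) (hj : j + 1 < n) :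
    SemiconjBy (rho n (j + 1)) (lam n (j + 1) (i + 1)) (lam n (j + 2) (i + 1)) := by
  refine semiconjBy_of_eq_mul_mul (rho_mul_self hj) ?_
  rw [lam, lam, if_neg (by lia : ¬ j + 2 < i + 1), if_neg (by lia : ¬ j + 1 < i + 1),
    if_pos (by lia), if_pos (by lia), (by lia : j + 2 - 1 - (i + 1) = j - 1 - i + 1),
    (by lia : j + 1 - 1 - (i + 1) = j - 1 - i), List.range'_concat,
    (by lia : i + 1 + 1 + 1 * (j - 1 - i) = j + 1)]
  simp [mul_assoc]

theorem semiconjBy_rho_lam_swap {k : ℕ} (hk : k + 1 < n) :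
    SemiconjBy (rho n (k + 1)) (lam n (k + 1) (k + 2)) (lam n (k + 2) (k + 1)) := by
  refine semiconjBy_of_eq_mul_mul (rho_mul_self hk) ?_
  rw [lam_succ_self, ← mul_assoc, rho_mul_self hk]
  simp [lam]

theorem semiconjBy_rho_lam_succ {k : ℕ} (hk : k + 2 < n) :
    SemiconjBy (rho n (k + 1)) (lam n (k + 1) (k + 3)) (lam n (k + 2) (k + 3)) := by
  have hrho : rho n (k + 2) * lam n (k + 1) (k + 2) = lam n (k + 1) (k + 3) * rho n (k + 2) :=
    semiconjBy_rho_lam_right (Nat.lt_succ_self k) hk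
  have hsigma : rho n (k + 1) * rho n (k + 2) * (sigma n (k + 1))⁻¹ =
      (sigma n (k + 2))⁻¹ * (rho n (k + 1) * rho n (k + 2)) :=
    SemiconjBy.inv_right ((rho_mul_rho_mul_sigma hk).trans (mul_assoc _ _ _))
  rw [SemiconjBy, ← mul_left_inj (rho n (k + 2))]
  calc rho n (k + 1) * lam n (k + 1) (k + 3) * rho n (k + 2)
      = rho n (k + 1) * rho n (k + 2) * rho n (k + 1) * (sigma n (k + 1))⁻¹ := by
        rw [mul_assoc, ← hrho, lam_succ_self]; simp only [mul_assoc]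
    _ = rho n (k + 2) * (rho n (k + 1) * rho n (k + 2) * (sigma n (k + 1))⁻¹) := by
        rw [rho_mul_rho_mul_rho hk]; simp only [mul_assoc]
    _ = lam n (k + 2) (k + 3) * rho n (k + 1) * rho n (k + 2) := by
        rw [hsigma, lam_succ_self]; simp only [mul_assoc]

theorem isStrandTriple_lam {k : ℕ} (hk : k + 2 < n) :
    IsStrandTriple (rho n (k + 1)) (rho n (k + 2))
      (lam n (k + 1) (k + 2)) (lam n (k + 2) (k + 3)) (lam n (k + 1) (k + 3)) where
  left_mul_self := rho_mul_self (by lia)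
  right_mul_self := rho_mul_self hk
  braid := rho_mul_rho_mul_rho hk
  left := semiconjBy_symm_of_mul_self (rho_mul_self (by lia)) (semiconjBy_rho_lam_succ hk)
  right := semiconjBy_rho_lam_right (Nat.lt_succ_self k) hk

theorem commute_lam_of_consecutive {k : ℕ} (hk : k + 2 < n) :
    Commute (lam n (k + 1) (k + 2)) (lam n (k + 2) (k + 3)) ∧
      Commute (lam n (k + 1) (k + 3)) (lam n (k + 2) (k + 3)) ∧
      Commute (lam n (k + 1) (k + 3)) (lam n (k + 1) (k + 2)) := by
  simpa only [Commute.inv_inv_iff] using (isStrandTriple_lam hk).inv.relations_iff_commute.1 (by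
    simp only [← sigma_eq_lam_inv_mul_rho]
    exact ⟨sigma_mul_sigma_mul_sigma hk, rho_mul_sigma_mul_sigma hk,
      rho_succ_mul_sigma_mul_sigma hk⟩)

theorem commute_lam_of_far {k l : ℕ} (hkl : k + 2 ≤ l) (hl : l + 1 < n) :
    Commute (lam n (k + 1) (k + 2)) (lam n (l + 1) (l + 2)) := by
  have hk : k + 1 < n := by lia
  rw [lam_succ_self, lam_succ_self]
  refine Commute.mul_left (Commute.mul_right ?_ ?_) (Commute.mul_right ?_ ?_)
  · exact commute_rho_rho hkl hl
  · exact (commute_sigma_rho (Or.inr hkl) hl hk).symm.inv_right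
  · exact (commute_sigma_rho (Or.inl hkl) hk hl).inv_left
  · exact (commute_sigma_sigma hkl hl).inv_inv

end Lambda

section Equivariance

/-- The element `λ_{i,j}` with the strands numbered from `0`, as elements of `Fin n`. -/
abbrev lamFin (i j : Fin n) : UVB n := lam n (i + 1) (j + 1)

variable {s : Equiv.Perm (Fin n) →* UVB n}

theorem _root_.IsPermSection.map_swap (hs : IsPermSection n s) {k : ℕ} (hk : k + 1 < n) :
    s (Equiv.swap ⟨k, by lia⟩ ⟨k + 1, hk⟩) = rho n (k + 1) :=
  hs (k + 1) (by lia) (by lia)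

theorem commute_map_of_fixes (hs : IsPermSection n s) (hn : 1 < n) {π : Equiv.Perm (Fin n)}
    (h₀ : π ⟨0, by lia⟩ = ⟨0, by lia⟩) (h₁ : π ⟨1, hn⟩ = ⟨1, hn⟩) :
    Commute (s π) (lam n 1 2) := by
  have hπ : π ∈ Subgroup.closure (adjacentSwaps n 2) := by
    refine adjacentSwaps.mem_closure fun x hx ↦ ?_
    obtain rfl | rfl : x = ⟨0, by lia⟩ ∨ x = ⟨1, hn⟩ := by grind
    exacts [h₀, h₁]
  suffices Subgroup.closure (adjacentSwaps n 2) ≤ (Subgroup.centralizer {lam n 1 2}).comap s from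
    Subgroup.mem_centralizer_singleton_iff.1 (this hπ)
  rw [Subgroup.closure_le]
  rintro _ ⟨k, hk, hle, rfl⟩
  rw [SetLike.mem_coe, Subgroup.mem_comap, hs.map_swap hk, Subgroup.mem_centralizer_singleton_iff,
    lam_succ_self]
  have hrho := commute_rho_rho (n := n) (k := 0) hle hk
  have hsigma := commute_sigma_rho (n := n) (k := 0) (Or.inl hle) hn hk
  exact (hrho.mul_left hsigma.inv_left).symm

/-- Some permutation `π` taking the strands `0`, `1` to `i`, `j` has a lift `s π` conjugating
`λ_{0,1}` to `λ_{i,j}`. -/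
def IsConjOfBase (s : Equiv.Perm (Fin n) →* UVB n) (hn : 1 < n) (i j : Fin n) : Prop :=
  ∃ π : Equiv.Perm (Fin n), π ⟨0, by lia⟩ = i ∧ π ⟨1, hn⟩ = j ∧
    SemiconjBy (s π) (lam n 1 2) (lamFin i j)

namespace IsConjOfBase

variable {hn : 1 < n}

theorem swap (hs : IsPermSection n s) {i j : Fin n} (h : IsConjOfBase s hn i j)
    {k : ℕ} (hk : k + 1 < n) {i' j' : Fin n}
    (hi : Equiv.swap ⟨k, by lia⟩ ⟨k + 1, hk⟩ i = i')
    (hj : Equiv.swap ⟨k, by lia⟩ ⟨k + 1, hk⟩ j = j')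
    (hlam : SemiconjBy (rho n (k + 1)) (lamFin i j) (lamFin i' j')) :
    IsConjOfBase s hn i' j' := by
  obtain ⟨π, rfl, rfl, hπ⟩ := h
  refine ⟨Equiv.swap ⟨k, by lia⟩ ⟨k + 1, hk⟩ * π, hi, hj, ?_⟩
  rw [map_mul, hs.map_swap hk]
  exact hlam.mul_left hπ

theorem of_succ (hs : IsPermSection n s) {k : ℕ} (hk : k + 1 < n) :
    IsConjOfBase s hn ⟨k, by lia⟩ ⟨k + 1, hk⟩ := by
  induction k with
  | zero => exact ⟨1, rfl, rfl, by rw [map_one]; exact SemiconjBy.one_left _⟩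
  | succ k ih =>
    have hskip : IsConjOfBase s hn ⟨k, by lia⟩ ⟨k + 2, hk⟩ :=
      (ih (by lia)).swap hs hk (Equiv.swap_apply_of_ne_of_ne (by simp) (by grind))
        (Equiv.swap_apply_left _ _) (semiconjBy_rho_lam_right (Nat.lt_succ_self k) hk)
    exact hskip.swap hs (by lia : k + 1 < n) (Equiv.swap_apply_left _ _)
      (Equiv.swap_apply_of_ne_of_ne (by simp) (by simp)) (semiconjBy_rho_lam_succ hk)

theorem of_lt (hs : IsPermSection n s) {i : Fin n} {j : ℕ} (hij : i + 1 ≤ j) (hj : j < n) :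
    IsConjOfBase s hn i ⟨j, hj⟩ := by
  induction j, hij using Nat.le_induction with
  | base => exact of_succ hs hj
  | succ j hij ih =>
    exact (ih (by lia)).swap hs hj
      (Equiv.swap_apply_of_ne_of_ne (by grind) (by grind))
      (Equiv.swap_apply_left _ _) (semiconjBy_rho_lam_right hij hj)

theorem of_gt (hs : IsPermSection n s) {i : Fin n} {j : ℕ} (hij : i + 1 ≤ j) (hj : j < n) :
    IsConjOfBase s hn ⟨j, hj⟩ i := by
  induction j, hij using Nat.le_induction with
  | base =>
    exact (of_succ hs hj).swap hs hj (Equiv.swap_apply_left _ _) (Equiv.swap_apply_right _ _)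
      (semiconjBy_rho_lam_swap hj)
  | succ j hij ih =>
    exact (ih (by lia)).swap hs hj (Equiv.swap_apply_left _ _)
      (Equiv.swap_apply_of_ne_of_ne (by grind) (by grind))
      (semiconjBy_rho_lam_left hij hj)

theorem of_ne (hs : IsPermSection n s) {i j : Fin n} (hij : i ≠ j) : IsConjOfBase s hn i j :=
  (lt_or_gt_of_ne hij).elim (fun h ↦ of_lt hs h j.2) (fun h ↦ of_gt hs h i.2)

end IsConjOfBase

theorem semiconjBy_map_lamFin (hs : IsPermSection n s) (π : Equiv.Perm (Fin n)) {i j : Fin n}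
    (hij : i ≠ j) : SemiconjBy (s π) (lamFin i j) (lamFin (π i) (π j)) := by
  have hn : 1 < n := Fin.nontrivial_iff_two_le.1 ⟨i, j, hij⟩
  obtain ⟨α, hαi, hαj, hα⟩ := IsConjOfBase.of_ne (hn := hn) hs hij
  obtain ⟨β, hβi, hβj, hβ⟩ := IsConjOfBase.of_ne (hn := hn) hs (π.injective.ne hij)
  have hstab : Commute (s (β⁻¹ * π * α)) (lam n 1 2) :=
    commute_map_of_fixes hs hn (by simp [hαi, ← hβi]) (by simp [hαj, ← hβj])
  have hsplit : s π = s β * s (β⁻¹ * π * α) * (s α)⁻¹ := by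
    simp only [← map_mul, ← map_inv]
    group
  rw [hsplit]
  exact (hβ.mul_left hstab).mul_left hα.inv_symm_left

end Equivariance

section Commutation

theorem commute_lamFin_of_map {a b c d : Fin n} (hab : a ≠ b) (hcd : c ≠ d)
    (h : Commute (lamFin a b) (lamFin c d)) (π : Equiv.Perm (Fin n)) :
    Commute (lamFin (π a) (π b)) (lamFin (π c) (π d)) := by
  obtain ⟨s, hs⟩ := exists_isPermSection n
  rw [eq_mul_inv_of_mul_eq (semiconjBy_map_lamFin hs π hab).eq.symm,
    eq_mul_inv_of_mul_eq (semiconjBy_map_lamFin hs π hcd).eq.symm, Commute.conj_iff]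
  exact h

theorem commute_lamFin_of_three {i j k : Fin n} (hij : i ≠ j) (hjk : j ≠ k) (hik : i ≠ k) :
    Commute (lamFin i j) (lamFin j k) ∧ Commute (lamFin i k) (lamFin j k) ∧
      Commute (lamFin i k) (lamFin i j) := by
  have hinj : Function.Injective ![i, j, k] := fun a b ↦ by
    fin_cases a <;> fin_cases b <;> simp_all [eq_comm]
  have hn : 3 ≤ n := by simpa using Fintype.card_le_of_injective _ hinj
  obtain ⟨π, hπ⟩ := Equiv.Perm.exists_extending_pair _ _ (Fin.castLE_injective hn) hinj
  obtain ⟨h₁, h₂, h₃⟩ := commute_lam_of_consecutive (k := 0) hn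
  obtain ⟨rfl, rfl, rfl⟩ : π (Fin.castLE hn 0) = i ∧ π (Fin.castLE hn 1) = j ∧
      π (Fin.castLE hn 2) = k := ⟨hπ 0, hπ 1, hπ 2⟩
  refine ⟨commute_lamFin_of_map ?_ ?_ h₁ π, commute_lamFin_of_map ?_ ?_ h₂ π,
    commute_lamFin_of_map ?_ ?_ h₃ π⟩ <;> simp [Fin.ext_iff]

theorem commute_lamFin_of_four {i j k l : Fin n} (hij : i ≠ j) (hkl : k ≠ l) (hik : i ≠ k)
    (hil : i ≠ l) (hjk : j ≠ k) (hjl : j ≠ l) : Commute (lamFin i j) (lamFin k l) := by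
  have hinj : Function.Injective ![i, j, k, l] := fun a b ↦ by
    fin_cases a <;> fin_cases b <;> simp_all [eq_comm]
  have hn : 4 ≤ n := by simpa using Fintype.card_le_of_injective _ hinj
  obtain ⟨π, hπ⟩ := Equiv.Perm.exists_extending_pair _ _ (Fin.castLE_injective hn) hinj
  obtain ⟨rfl, rfl, rfl, rfl⟩ : π (Fin.castLE hn 0) = i ∧ π (Fin.castLE hn 1) = j ∧
      π (Fin.castLE hn 2) = k ∧ π (Fin.castLE hn 3) = l := ⟨hπ 0, hπ 1, hπ 2, hπ 3⟩
  exact commute_lamFin_of_map (by simp [Fin.ext_iff]) (by simp [Fin.ext_iff])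
    (commute_lam_of_far (k := 0) (l := 2) (by lia) hn) π

theorem commute_lamFin {i j k l : Fin n} (hij : i ≠ j) (hkl : k ≠ l) (h : s(i, j) ≠ s(k, l)) :
    Commute (lamFin i j) (lamFin k l) := by
  by_cases hik : i = k
  · subst hik
    have hjl : j ≠ l := by rintro rfl; exact h rfl
    exact (commute_lamFin_of_three hij hjl hkl).2.2.symm
  by_cases hjl : j = l
  · subst hjl
    exact (commute_lamFin_of_three hik hkl hij).2.1
  by_cases hil : i = l
  · subst hil
    have hkj : k ≠ j := by rintro rfl; exact h Sym2.eq_swap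
    exact (commute_lamFin_of_three hkl hij hkj).1.symm
  by_cases hjk : j = k
  · subst hjk
    exact (commute_lamFin_of_three hij hkl hil).1
  exact commute_lamFin_of_four hij hkl hik hil hjk hjl

end Commutation

end UVB

namespace UVB

variable {n : ℕ}

section Model

open UVBGen

/-- The images in `PairModel (Fin n)` of the generators of `UVB n`. -/
def modelGen : UVBGen n → PairModel (Fin n) :=
  Sum.elim (fun k ↦ PairModel.sigma ⟨k, by lia⟩ ⟨k + 1, by lia⟩)
    (fun k ↦ PairModel.rho ⟨k, by lia⟩ ⟨k + 1, by lia⟩)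

theorem lift_modelGen_eq_one {r : FreeGroup (UVBGen n)} (hr : r ∈ uvbRels n) :
    FreeGroup.lift modelGen r = 1 := by
  obtain ⟨⟨i, hi⟩, ⟨j, hj⟩, hij, hr⟩ | ⟨⟨i, hi⟩, ⟨j, hj⟩, hij, hr⟩ | ⟨i, rfl⟩ := hr
  · obtain rfl : j = i + 1 := hij
    have htriple := PairModel.isStrandTriple (i := (⟨i, by lia⟩ : Fin n))
      (j := ⟨i + 1, by lia⟩) (k := ⟨i + 2, by lia⟩) (by simp) (by simp) (by simp)
    have hrel := PairModel.sigma_rho_relations (i := (⟨i, by lia⟩ : Fin n))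
      (j := ⟨i + 1, by lia⟩) (k := ⟨i + 2, by lia⟩) (by simp) (by simp) (by simp)
    obtain rfl | rfl | rfl | rfl | rfl := hr <;>
      rw [map_mul, map_inv, mul_inv_eq_one] <;>
      simp only [sg, rg, map_mul, FreeGroup.lift_apply_of, modelGen, Sum.elim_inl, Sum.elim_inr]
    exacts [hrel.1, htriple.braid, htriple.inv.mixed.trans (mul_assoc _ _ _).symm, hrel.2.1,
      hrel.2.2]
  · have hfar := PairModel.commute_of_disjoint (i := (⟨i, by lia⟩ : Fin n)) (j := ⟨i + 1, by lia⟩)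
      (k := ⟨j, by lia⟩) (l := ⟨j + 1, by lia⟩) (by grind) (by grind) (by grind) (by grind)
    obtain rfl | rfl | rfl := hr <;>
      rw [map_mul, map_inv, mul_inv_eq_one] <;>
      simp only [sg, rg, map_mul, FreeGroup.lift_apply_of, modelGen, Sum.elim_inl, Sum.elim_inr]
    exacts [hfar.1.eq, hfar.2.1.eq, hfar.2.2.eq]
  · simp only [rg, map_mul, FreeGroup.lift_apply_of, modelGen, Sum.elim_inr,
      PairModel.rho_mul_self]

/-- The representation of `UVB n` by pairs of a permutation and a family of free-group elements. -/
def toModel (n : ℕ) : UVB n →* PairModel (Fin n) :=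
  PresentedGroup.toGroup (f := modelGen) fun _ ↦ lift_modelGen_eq_one

theorem toModel_rho {k : ℕ} (hk : k + 1 < n) :
    toModel n (rho n (k + 1)) = PairModel.rho ⟨k, by lia⟩ ⟨k + 1, hk⟩ := by
  rw [rho_succ_eq_mk hk]
  exact PresentedGroup.toGroup.of _

theorem toModel_sigma {k : ℕ} (hk : k + 1 < n) :
    toModel n (sigma n (k + 1)) = PairModel.sigma ⟨k, by lia⟩ ⟨k + 1, hk⟩ := by
  rw [sigma_succ_eq_mk hk]
  exact PresentedGroup.toGroup.of _

variable {s : Equiv.Perm (Fin n) →* UVB n}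

theorem toModel_map (hs : IsPermSection n s) (π : Equiv.Perm (Fin n)) :
    toModel n (s π) = SemidirectProduct.inr π := by
  suffices (toModel n).comp s = SemidirectProduct.inr from DFunLike.congr_fun this π
  refine adjacentSwaps.monoidHom_ext fun k hk ↦ ?_
  rw [MonoidHom.comp_apply, hs.map_swap hk, toModel_rho hk, PairModel.rho]

theorem toModel_lamFin {i j : Fin n} (hij : i ≠ j) :
    toModel n (lamFin i j) = PairModel.lam i j := by
  obtain ⟨s, hs⟩ := exists_isPermSection n
  have hn : 1 < n := Fin.nontrivial_iff_two_le.1 ⟨i, j, hij⟩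
  have hbase : toModel n (lam n 1 2) = PairModel.lam ⟨0, by lia⟩ ⟨1, hn⟩ := by
    rw [lam_succ_self, map_mul, map_inv, toModel_rho (k := 0) hn, toModel_sigma (k := 0) hn,
      PairModel.sigma, mul_inv_rev, inv_inv, mul_inv_cancel_left]
  obtain ⟨π, rfl, rfl, hπ⟩ := IsConjOfBase.of_ne (hn := hn) hs hij
  have hconj := hπ.map (toModel n)
  rw [toModel_map hs, hbase] at hconj
  exact mul_right_cancel (hconj.eq.symm.trans (PairModel.semiconjBy_inr_lam π _ _).eq)

end Model

section Kernel

theorem lamFin_mem_iSup_pairSubgroup {i j : Fin n} (hij : i ≠ j) :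
    lamFin i j ∈ ⨆ p, pairSubgroup n p := by
  obtain hlt | hlt := lt_or_gt_of_ne hij
  · exact Subgroup.mem_iSup_of_mem ⟨(i, j), hlt⟩ (Subgroup.subset_closure (Set.mem_insert _ _))
  · exact Subgroup.mem_iSup_of_mem ⟨(j, i), hlt⟩
      (Subgroup.subset_closure (Set.mem_insert_of_mem _ (Set.mem_singleton _)))

theorem iSup_pairSubgroup_le {K : Subgroup (UVB n)} (h : ∀ i j : Fin n, i ≠ j → lamFin i j ∈ K) :
    ⨆ p, pairSubgroup n p ≤ K := by
  refine iSup_le fun p ↦ (Subgroup.closure_le _).2 ?_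
  rintro _ (rfl | rfl)
  exacts [h _ _ p.2.ne, h _ _ p.2.ne']

variable {s : Equiv.Perm (Fin n) →* UVB n}

theorem iSup_pairSubgroup_sup_range (hs : IsPermSection n s) :
    (⨆ p, pairSubgroup n p) ⊔ s.range = ⊤ := by
  have hrho {k : ℕ} (hk : k + 1 < n) : rho n (k + 1) ∈ (⨆ p, pairSubgroup n p) ⊔ s.range :=
    Subgroup.mem_sup_right ⟨_, hs.map_swap hk⟩
  rw [eq_top_iff, ← PresentedGroup.closure_range_of, Subgroup.closure_le]
  rintro _ ⟨⟨k, hk⟩ | ⟨k, hk⟩, rfl⟩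
  · have hk : k + 1 < n := by lia
    suffices sigma n (k + 1) ∈ (⨆ p, pairSubgroup n p) ⊔ s.range by
      rwa [sigma_succ_eq_mk hk] at this
    rw [sigma_eq_lam_inv_mul_rho]
    exact mul_mem (inv_mem (Subgroup.mem_sup_left
      (lamFin_mem_iSup_pairSubgroup (i := ⟨k, by lia⟩) (j := ⟨k + 1, hk⟩) (by simp)))) (hrho hk)
  · have hk : k + 1 < n := by lia
    have hmem := hrho hk
    rwa [rho_succ_eq_mk hk] at hmem

theorem range_le_normalizer_iSup_pairSubgroup (hs : IsPermSection n s) :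
    s.range ≤ Subgroup.normalizer (⨆ p, pairSubgroup n p : Subgroup (UVB n)) := by
  have hconj (π : Equiv.Perm (Fin n)) {x : UVB n} (hx : x ∈ ⨆ p, pairSubgroup n p) :
      s π * x * (s π)⁻¹ ∈ ⨆ p, pairSubgroup n p := by
    suffices ⨆ p, pairSubgroup n p ≤
        (⨆ p, pairSubgroup n p).comap (MulAut.conj (s π)).toMonoidHom from this hx
    refine iSup_pairSubgroup_le fun i j hij ↦ ?_
    change s π * lamFin i j * (s π)⁻¹ ∈ ⨆ p, pairSubgroup n p
    rw [(semiconjBy_map_lamFin hs π hij).eq, mul_inv_cancel_right]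
    exact lamFin_mem_iSup_pairSubgroup (π.injective.ne hij)
  rintro _ ⟨π, rfl⟩
  refine Subgroup.mem_normalizer_iff.2 fun x ↦ ⟨hconj π, fun hx ↦ ?_⟩
  have hinv := hconj π⁻¹ hx
  rwa [map_inv, inv_inv, mul_assoc _ x, inv_mul_cancel_left, inv_mul_cancel_right] at hinv

theorem normal_iSup_pairSubgroup (n : ℕ) : (⨆ p, pairSubgroup n p).Normal := by
  obtain ⟨s, hs⟩ := exists_isPermSection n
  rw [← Subgroup.normalizer_eq_top_iff, eq_top_iff, ← iSup_pairSubgroup_sup_range hs]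
  exact sup_le Subgroup.le_normalizer (range_le_normalizer_iSup_pairSubgroup hs)

variable {ι : UVB n →* Equiv.Perm (Fin n)}

theorem _root_.IsIota.map_map (hι : IsIota n ι) (hs : IsPermSection n s) (π : Equiv.Perm (Fin n)) :
    ι (s π) = π := by
  suffices ι.comp s = MonoidHom.id _ from DFunLike.congr_fun this π
  refine adjacentSwaps.monoidHom_ext fun k hk ↦ ?_
  rw [MonoidHom.comp_apply, hs.map_swap hk]
  exact (hι (k + 1) (by lia) (by lia)).2

theorem _root_.IsIota.map_lamFin (hι : IsIota n ι) {i j : Fin n} (hij : i ≠ j) :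
    ι (lamFin i j) = 1 := by
  obtain ⟨s, hs⟩ := exists_isPermSection n
  have hn : 1 < n := Fin.nontrivial_iff_two_le.1 ⟨i, j, hij⟩
  have hbase : ι (lam n 1 2) = 1 := by
    rw [lam_succ_self, map_mul, map_inv, (hι 1 le_rfl (by lia)).1, (hι 1 le_rfl (by lia)).2,
      mul_inv_cancel]
  obtain ⟨π, rfl, rfl, hπ⟩ := IsConjOfBase.of_ne (hn := hn) hs hij
  have hconj := hπ.map ι
  rwa [hbase, SemiconjBy, mul_one, eq_comm, mul_eq_right] at hconj

theorem _root_.IsIota.ker_eq_iSup_pairSubgroup (hι : IsIota n ι) :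
    ι.ker = ⨆ p, pairSubgroup n p := by
  obtain ⟨s, hs⟩ := exists_isPermSection n
  have hle : ⨆ p, pairSubgroup n p ≤ ι.ker := iSup_pairSubgroup_le fun i j ↦ hι.map_lamFin
  refine le_antisymm (fun x hx ↦ ?_) hle
  have := normal_iSup_pairSubgroup n
  obtain ⟨y, hy, _, ⟨π, rfl⟩, rfl⟩ := Subgroup.mem_sup_of_normal_left.1
    (iSup_pairSubgroup_sup_range hs ▸ Subgroup.mem_top x)
  have hπ : π = 1 := by
    rwa [MonoidHom.mem_ker, map_mul, hι.map_map hs, MonoidHom.mem_ker.1 (hle hy), one_mul] at hx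
  rwa [hπ, map_one, mul_one]

end Kernel

end UVB

theorem PairIdx.sym2_ne {n : ℕ} {p q : PairIdx n} (hpq : p ≠ q) :
    s(p.1.1, p.1.2) ≠ s(q.1.1, q.1.2) := by
  obtain ⟨⟨i, j⟩, hij⟩ := p
  obtain ⟨⟨k, l⟩, hkl⟩ := q
  intro h
  obtain ⟨rfl, rfl⟩ | ⟨rfl, rfl⟩ := Sym2.eq_iff.1 h
  · exact hpq rfl
  · exact hij.asymm hkl

namespace UVB

variable {n : ℕ}

section DirectProduct

variable {G : Type*} [Group G]

/-- For a family `f i j` of elements indexed by the ordered pairs, the homomorphism from the free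
group of rank two sending its basis to `f i j` and `f j i`, where `{i, j}` is the pair `p`. -/
def pairHom (f : Fin n → Fin n → G) (p : PairIdx n) : FreeGroup Bool →* G :=
  pairLift (f p.1.1 p.1.2) (f p.1.2 p.1.1)

theorem commute_pairHom {f : Fin n → Fin n → G}
    (hf : ∀ i j k l, i ≠ j → k ≠ l → s(i, j) ≠ s(k, l) → Commute (f i j) (f k l)) :
    Pairwise fun p q : PairIdx n ↦ ∀ u v, Commute (pairHom f p u) (pairHom f q v) := by
  intro p q hpq
  have h := PairIdx.sym2_ne hpq
  refine commute_pairLift (hf _ _ _ _ p.2.ne q.2.ne h) (hf _ _ _ _ p.2.ne q.2.ne' ?_)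
    (hf _ _ _ _ p.2.ne' q.2.ne ?_) (hf _ _ _ _ p.2.ne' q.2.ne' ?_)
  · rwa [Sym2.eq_swap (a := q.1.2)]
  · rwa [Sym2.eq_swap (a := p.1.2)]
  · rwa [Sym2.eq_swap (a := p.1.2), Sym2.eq_swap (a := q.1.2)]

theorem commute_pairHom_pairGen : Pairwise fun p q : PairIdx n ↦
    ∀ u v, Commute (pairHom pairGen p u) (pairHom pairGen q v) :=
  commute_pairHom fun _ _ _ _ _ _ ↦ commute_pairGen

theorem noncommPiCoprod_pairHom_pairGen_injective :
    Function.Injective (MonoidHom.noncommPiCoprod _ (commute_pairHom_pairGen (n := n))) := by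
  refine noncommPiCoprod_injective_of_retraction _
    (ψ := fun p ↦ Pi.evalMonoidHom _ p.1) (fun p ↦ ?_) (fun p q hpq ↦ ?_)
  · rw [pairHom, map_comp_pairLift, Pi.evalMonoidHom_apply, Pi.evalMonoidHom_apply,
      pairGen_apply_self, pairGen_apply_swap p.2.ne', pairLift_of]
  · have h := PairIdx.sym2_ne hpq
    rw [pairHom, map_comp_pairLift, Pi.evalMonoidHom_apply, Pi.evalMonoidHom_apply,
      pairGen_apply_of_ne h, pairGen_apply_of_ne (by rwa [Sym2.eq_swap (a := q.1.2)]),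
      pairLift_one]

theorem range_pairHom_lamFin (p : PairIdx n) : (pairHom lamFin p).range = pairSubgroup n p :=
  range_pairLift _ _

theorem commute_pairHom_lamFin : Pairwise fun p q : PairIdx n ↦
    ∀ u v, Commute (pairHom lamFin p u) (pairHom lamFin q v) :=
  commute_pairHom fun _ _ _ _ ↦ commute_lamFin

theorem commute_of_mem_pairSubgroup {p q : PairIdx n} (hpq : p ≠ q) {x y : UVB n}
    (hx : x ∈ pairSubgroup n p) (hy : y ∈ pairSubgroup n q) : Commute x y := by
  rw [← range_pairHom_lamFin] at hx hy
  obtain ⟨u, rfl⟩ := hx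
  obtain ⟨v, rfl⟩ := hy
  exact commute_pairHom_lamFin hpq u v

theorem noncommPiCoprod_pairHom_lamFin_injective :
    Function.Injective (MonoidHom.noncommPiCoprod _ (commute_pairHom_lamFin (n := n))) := by
  have hmodel : (toModel n).comp (MonoidHom.noncommPiCoprod _ commute_pairHom_lamFin) =
      SemidirectProduct.inl.comp (MonoidHom.noncommPiCoprod _ commute_pairHom_pairGen) := by
    refine MonoidHom.pi_ext fun p u ↦ ?_
    simp only [MonoidHom.comp_apply, MonoidHom.noncommPiCoprod_mulSingle]
    suffices (toModel n).comp (pairHom lamFin p) =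
        SemidirectProduct.inl.comp (pairHom pairGen p) from DFunLike.congr_fun this u
    rw [pairHom, pairHom, map_comp_pairLift, map_comp_pairLift, toModel_lamFin p.2.ne,
      toModel_lamFin p.2.ne', PairModel.lam, PairModel.lam]
  refine Function.Injective.of_comp (f := toModel n) ?_
  rw [← MonoidHom.coe_comp, hmodel, MonoidHom.coe_comp]
  exact SemidirectProduct.inl_injective.comp noncommPiCoprod_pairHom_pairGen_injective

theorem pairHom_lamFin_injective (p : PairIdx n) : Function.Injective (pairHom lamFin p) :=
  injective_of_noncommPiCoprod_injective noncommPiCoprod_pairHom_lamFin_injective p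

theorem range_noncommPiCoprod_pairHom_lamFin :
    (MonoidHom.noncommPiCoprod _ (commute_pairHom_lamFin (n := n))).range =
      ⨆ p, pairSubgroup n p := by
  simp only [MonoidHom.noncommPiCoprod_range, range_pairHom_lamFin]

end DirectProduct

end UVB

/-- For `n ≥ 2`: each subgroup `⟨λ_{i,j}, λ_{j,i}⟩` is free of rank 2,
freely generated by λ_{i,j} and λ_{j,i}; the n(n−1)/2 subgroups pairwise commute
elementwise; `UVP n` is their internal direct product (the canonical homomorphism from
the direct product of the family is injective with range `UVP n`); and consequently
`UVP n` is isomorphic to a direct product of n(n−1)/2 free groups of rank 2. -/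
theorem statement1 (n : ℕ) (hn : 2 ≤ n)
    (ι : UVB n →* Equiv.Perm (Fin n)) (hι : IsIota n ι) :
    (∀ p : PairIdx n,
        Function.Injective (FreeGroup.lift (fun b : Bool =>
          if b then UVB.lam n (p.1.1.val + 1) (p.1.2.val + 1)
          else UVB.lam n (p.1.2.val + 1) (p.1.1.val + 1)) : FreeGroup Bool →* UVB n) ∧
        (FreeGroup.lift (fun b : Bool =>
          if b then UVB.lam n (p.1.1.val + 1) (p.1.2.val + 1)
          else UVB.lam n (p.1.2.val + 1) (p.1.1.val + 1))).range = pairSubgroup n p) ∧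
    (∀ p q : PairIdx n, p ≠ q →
        ∀ x ∈ pairSubgroup n p, ∀ y ∈ pairSubgroup n q, Commute x y) ∧
    (∀ hcomm : Pairwise fun p q : PairIdx n =>
        ∀ x y : UVB n, x ∈ pairSubgroup n p → y ∈ pairSubgroup n q → Commute x y,
      Function.Injective (Subgroup.noncommPiCoprod hcomm) ∧
      (Subgroup.noncommPiCoprod hcomm).range = ι.ker) ∧
    Nonempty ((↥ι.ker) ≃* ((p : PairIdx n) → FreeGroup Bool)) := by
  refine ⟨fun p ↦ ⟨UVB.pairHom_lamFin_injective p, UVB.range_pairHom_lamFin p⟩,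
    fun p q hpq x hx y hy ↦ UVB.commute_of_mem_pairSubgroup hpq hx hy, fun hcomm ↦ ⟨?_, ?_⟩, ?_⟩
  · exact subgroup_noncommPiCoprod_injective UVB.range_pairHom_lamFin
      UVB.noncommPiCoprod_pairHom_lamFin_injective hcomm
  · rw [Subgroup.noncommPiCoprod_range, hι.ker_eq_iSup_pairSubgroup]
  · rw [hι.ker_eq_iSup_pairSubgroup, ← UVB.range_noncommPiCoprod_pairHom_lamFin]
    exact ⟨(MonoidHom.ofInjective UVB.noncommPiCoprod_pairHom_lamFin_injective).symm⟩
end
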